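/- arXiv:math/9804001 — 9 statements merged into one kernel-verified Lean document; each statement's English description precedes it below -/
import Mathlib

section
/- Let m ≥ 1 and let E be a symmetric m×m complex matrix (Eᵀ = E). Then there exists a unitary matrix U ∈ M_m(ℂ) and a vector λ = (λ₁,…,λ_m) ∈ ℝ^m with λ₁ ≥ λ₂ ≥ … ≥ λ_m ≥ 0 such that U E Uᵀ = D_m(λ). Moreover, λ is unique: if U and U' are unitary and λ, λ' are vectors with nonincreasing nonnegative entries satisfying U E Uᵀ = D_m(λ) and U' E U'ᵀ = D_m(λ'), then λ = λ'. -/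
/-!
Existence. The map `T x = E x̄` on `ℂᵐ` is conjugate-linear, and the symmetry of `E` says
`⟪x, T y⟫ = ⟪y, T x⟫`. Such a map has an orthonormal family of `m` eigenvectors with eigenvalues
`λᵢ ≥ 0`: its square is complex linear and so has an eigenvector `v`, whose eigenvalue `s²` is
nonnegative because `⟪v, T (T v)⟫ = ‖T v‖²`. Then `T v + s v`, or `i v` if that sum vanishes, is an
eigenvector of `T` for `s` (`IsConjSymm.exists_eigenvector`). The orthogonal complement of an
eigenvector is `T`-invariant, so induction on the dimension gives the whole family
(`IsConjSymm.exists_orthonormal`). If `A` has these vectors as columns, sorted by eigenvalue, then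
`E Ā = A D(λ)`, and `U = Aᴴ` works.

Uniqueness. From `U E Uᵀ = D(λ)` one gets `U (E Eᴴ) Uᴴ = D(λ²)`, so the characteristic polynomial
of `E Eᴴ` determines the multiset of the `λᵢ²`, hence that of the `λᵢ ≥ 0`, hence the sorted
vector `λ`.
-/

open Matrix
open scoped InnerProductSpace

/-- `T` is conjugate-linear and symmetric, in the sense that `⟪x, T y⟫ = ⟪y, T x⟫`; on `ℂᵐ` these
are the maps `x ↦ E x̄` with `E` a symmetric matrix. -/
structure IsConjSymm {V : Type*} [NormedAddCommGroup V] [InnerProductSpace ℂ V]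
    (T : V → V) : Prop where
  map_add : ∀ x y, T (x + y) = T x + T y
  map_smul : ∀ (c : ℂ) x, T (c • x) = star c • T x
  inner_comm : ∀ x y, ⟪x, T y⟫_ℂ = ⟪y, T x⟫_ℂ

theorem IsConjSymm.exists_eigenvector {V : Type*} [NormedAddCommGroup V] [InnerProductSpace ℂ V]
    [FiniteDimensional ℂ V] [Nontrivial V] {T : V → V} (hT : IsConjSymm T) :
    ∃ (s : ℝ) (v : V), 0 ≤ s ∧ ‖v‖ = 1 ∧ T v = (s : ℂ) • v := by
  suffices h : ∃ (s : ℝ) (v : V), 0 ≤ s ∧ v ≠ 0 ∧ T v = (s : ℂ) • v by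
    obtain ⟨s, v, hs, hv, h⟩ := h
    refine ⟨s, ((‖v‖⁻¹ : ℝ) : ℂ) • v, hs, ?_, ?_⟩
    · rw [norm_smul, Complex.norm_real, norm_inv, norm_norm, inv_mul_cancel₀ (norm_ne_zero_iff.2 hv)]
    · rw [hT.map_smul, h, smul_comm]
      simp
  let S : V →ₗ[ℂ] V :=
    { toFun := fun x => T (T x)
      map_add' := fun x y => by simp only [hT.map_add]
      map_smul' := fun c x => by simp only [hT.map_smul, star_star, RingHom.id_apply] }
  obtain ⟨μ, hμ⟩ := Module.End.exists_eigenvalue S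
  obtain ⟨v, hv⟩ := hμ.exists_hasEigenvector
  have hSv : T (T v) = μ • v := hv.apply_eq_smul
  have hv0 : v ≠ 0 := hv.2
  have hn : (‖v‖ : ℂ) ^ 2 ≠ 0 := by simpa using hv0
  -- Pairing `T (T v) = μ v` with `v` gives `‖T v‖² = μ ‖v‖²`
  have h1 : (‖T v‖ : ℂ) ^ 2 = μ * (‖v‖ : ℂ) ^ 2 := by
    have h2 := hT.inner_comm v (T v)
    rw [hSv, inner_smul_right, inner_self_eq_norm_sq_to_K, inner_self_eq_norm_sq_to_K] at h2
    exact h2.symm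
  obtain ⟨s, hs, hμs⟩ : ∃ s : ℝ, 0 ≤ s ∧ μ = (s : ℂ) * s := by
    refine ⟨‖T v‖ / ‖v‖, by positivity, ?_⟩
    rw [eq_div_of_mul_eq hn h1.symm]
    push_cast
    ring
  have hT2 : T (T v) = (s : ℂ) • (s : ℂ) • v := by rw [hSv, hμs, mul_smul]
  -- In general `T (T v + s v) = s (T v + s v)`; if `T v = -s v` instead, then `T (i v) = s (i v)`.
  by_cases hw : T v + (s : ℂ) • v = 0
  · refine ⟨s, Complex.I • v, hs, by simpa using hv0, ?_⟩
    rw [hT.map_smul, eq_neg_of_add_eq_zero_left hw, smul_comm]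
    simp
  · refine ⟨s, T v + (s : ℂ) • v, hs, hw, ?_⟩
    rw [hT.map_add, hT.map_smul, hT2, smul_add, add_comm]
    simp

/-- Spectral theorem for symmetric conjugate-linear maps; the phase of each eigenvector can be chosen
so that its eigenvalue is nonnegative. -/
theorem IsConjSymm.exists_orthonormal (n : ℕ) : ∀ {V : Type} [NormedAddCommGroup V]
    [InnerProductSpace ℂ V] [FiniteDimensional ℂ V] {T : V → V}, IsConjSymm T →
    Module.finrank ℂ V = n →
    ∃ (lam : Fin n → ℝ) (v : Fin n → V), (∀ i, 0 ≤ lam i) ∧ Orthonormal ℂ v ∧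
      ∀ i, T (v i) = (lam i : ℂ) • v i := by
  induction n with
  | zero =>
    intro V _ _ _ T _ _
    exact ⟨Fin.elim0, Fin.elim0, fun i => i.elim0, ⟨fun i => i.elim0, fun i => i.elim0⟩,
      fun i => i.elim0⟩
  | succ n ih =>
    intro V _ _ _ T hT hV
    have : Nontrivial V := Module.nontrivial_of_finrank_pos (R := ℂ) (by omega)
    obtain ⟨s, e, hs, he, hTe⟩ := hT.exists_eigenvector
    have he0 : e ≠ 0 := by rintro rfl; simp at he
    have hinv : ∀ x ∈ (ℂ ∙ e)ᗮ, T x ∈ (ℂ ∙ e)ᗮ := by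
      intro x hx
      rw [Submodule.mem_orthogonal_singleton_iff_inner_right] at hx ⊢
      rw [hT.inner_comm, hTe, inner_smul_right, inner_eq_zero_symm.1 hx, mul_zero]
    have : Fact (Module.finrank ℂ V = n + 1) := ⟨hV⟩
    obtain ⟨lam, v, hlam, hv, hTv⟩ := ih
      (T := fun x : (ℂ ∙ e)ᗮ => ⟨T x, hinv x x.2⟩)
      ⟨fun x y => Subtype.ext (hT.map_add _ _), fun c x => Subtype.ext (hT.map_smul _ _),
        fun x y => hT.inner_comm _ _⟩ (Submodule.finrank_orthogonal_span_singleton he0)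
    refine ⟨Fin.cons s lam, Fin.cons e (fun i => (v i : V)), ?_, ?_, ?_⟩
    · exact Fin.cases hs hlam
    · have hev : ∀ i, ⟪e, (v i : V)⟫_ℂ = 0 := fun i =>
        (Submodule.mem_orthogonal_singleton_iff_inner_right).1 (v i).2
      constructor
      · exact Fin.cases he hv.1
      · intro i j
        refine Fin.cases (Fin.cases ?_ ?_ j) (fun i => Fin.cases ?_ ?_ j) i
        · simp
        · intro j _; exact hev j
        · intro _; exact inner_eq_zero_symm.1 (hev i)
        · intro j hij; exact hv.2 (fun h => hij (congrArg _ h))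
    · exact Fin.cases hTe (fun i => congrArg Subtype.val (hTv i))

theorem takagi_existence {m : ℕ} (E : Matrix (Fin m) (Fin m) ℂ) (hE : Eᵀ = E) :
    ∃ (U : Matrix (Fin m) (Fin m) ℂ) (lam : Fin m → ℝ),
        Uᴴ * U = 1 ∧
        (∀ i j : Fin m, i ≤ j → lam j ≤ lam i) ∧ (∀ i, 0 ≤ lam i) ∧
        U * E * Uᵀ = Matrix.diagonal fun i => (lam i : ℂ) := by
  let T : EuclideanSpace ℂ (Fin m) → EuclideanSpace ℂ (Fin m) :=
    fun x => WithLp.toLp 2 (E *ᵥ star x.ofLp)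
  have hT : IsConjSymm T := by
    refine ⟨fun x y => ?_, fun c x => ?_, fun x y => ?_⟩
    · simp [T, mulVec_add]
    · simp [T, mulVec_smul]
    · simp only [T, EuclideanSpace.inner_eq_star_dotProduct]
      rw [dotProduct_comm, dotProduct_mulVec, ← mulVec_transpose, hE]
  obtain ⟨lam, v, hlam, hv, hTv⟩ := IsConjSymm.exists_orthonormal m hT (by simp)
  -- Sorting `-lam` in increasing order sorts `lam` in decreasing order.
  let σ := Tuple.sort (fun i => -lam i)
  have hσ : Monotone ((fun i => -lam i) ∘ σ) := Tuple.monotone_sort _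
  let A : Matrix (Fin m) (Fin m) ℂ := of fun i j => v (σ j) i
  have hA : Aᴴ * A = 1 := by
    ext i j
    have h := orthonormal_iff_ite.1 hv (σ i) (σ j)
    rw [EuclideanSpace.inner_eq_star_dotProduct, dotProduct_comm] at h
    simpa [one_apply, mul_apply, A, dotProduct] using h
  have hEA : E * Aᴴᵀ = A * diagonal (fun i => (lam (σ i) : ℂ)) := by
    ext i j
    have h := congrArg (fun w => w.ofLp i) (hTv (σ j))
    rw [mul_diagonal, mul_apply]
    simpa [T, mulVec, dotProduct, A, mul_comm] using h
  refine ⟨Aᴴ, lam ∘ σ, ?_, fun i j hij => neg_le_neg_iff.1 (hσ hij), fun i => hlam _, ?_⟩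
  · rw [conjTranspose_conjTranspose, mul_eq_one_comm, hA]
  · rw [mul_assoc, hEA, ← mul_assoc, hA, one_mul]; rfl

/-- The matrix `E * Eᴴ` is unitarily similar to the diagonal matrix of the `λᵢ²`. -/
theorem takagi_charpoly {m : ℕ} {E U : Matrix (Fin m) (Fin m) ℂ} {lam : Fin m → ℝ}
    (hU : Uᴴ * U = 1) (h : U * E * Uᵀ = diagonal (fun i => (lam i : ℂ))) :
    (E * Eᴴ).charpoly = ∏ i, (Polynomial.X - Polynomial.C ((lam i : ℂ) ^ 2)) := by
  have hU' : Uᵀ * Uᵀᴴ = 1 := by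
    have := congrArg transpose hU
    rwa [transpose_mul, transpose_one] at this
  have h2 : U * (E * Eᴴ) * Uᴴ = diagonal (fun i => (lam i : ℂ) ^ 2) := by
    calc U * (E * Eᴴ) * Uᴴ = U * E * (Uᵀ * Uᵀᴴ) * Eᴴ * Uᴴ := by
          rw [hU']; simp only [mul_assoc, one_mul]
      _ = (U * E * Uᵀ) * (U * E * Uᵀ)ᴴ := by
          simp only [conjTranspose_mul, mul_assoc]
      _ = _ := by
          rw [h, diagonal_conjTranspose, diagonal_mul_diagonal]
          congr 1; ext i; simp [sq]
  rw [← charpoly_diagonal, ← h2, charpoly_mul_comm _ Uᴴ, ← mul_assoc, hU, one_mul]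

/-- A sorted nonnegative vector is determined by the polynomial whose roots are its squared
entries. -/
theorem eq_of_prod_X_sub_C_sq_eq {m : ℕ} {lam lam' : Fin m → ℝ}
    (ha : ∀ i j : Fin m, i ≤ j → lam j ≤ lam i) (h0 : ∀ i, 0 ≤ lam i)
    (ha' : ∀ i j : Fin m, i ≤ j → lam' j ≤ lam' i) (h0' : ∀ i, 0 ≤ lam' i)
    (h : ∏ i, (Polynomial.X - Polynomial.C ((lam i : ℂ) ^ 2)) =
      ∏ i, (Polynomial.X - Polynomial.C ((lam' i : ℂ) ^ 2))) : lam = lam' := by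
  have hroots : ∀ f : Fin m → ℝ,
      (∏ i, (Polynomial.X - Polynomial.C ((f i : ℂ) ^ 2))).roots =
        Finset.univ.val.map (fun i => (f i : ℂ) ^ 2) := fun f => by
    rw [← Polynomial.roots_multiset_prod_X_sub_C
      (Finset.univ.val.map (fun i => (f i : ℂ) ^ 2)), Multiset.map_map]
    rfl
  have hr := congrArg Polynomial.roots h
  rw [hroots, hroots] at hr
  have hsqrt : ∀ f : Fin m → ℝ, (∀ i, 0 ≤ f i) →
      (Finset.univ.val.map (fun i => (f i : ℂ) ^ 2)).map (fun z => √z.re) =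
        Finset.univ.val.map f := fun f hf => by
    rw [Multiset.map_map]
    refine Multiset.map_congr rfl fun i _ => ?_
    rw [Function.comp_apply, ← Complex.ofReal_pow, Complex.ofReal_re, Real.sqrt_sq (hf i)]
  have hm := congrArg (Multiset.map (fun z : ℂ => √z.re)) hr
  rw [hsqrt _ h0, hsqrt _ h0', Fin.univ_val_map, Fin.univ_val_map, Multiset.coe_eq_coe] at hm
  have hanti : Antitone lam := fun i j hij => ha i j hij
  have hanti' : Antitone lam' := fun i j hij => ha' i j hij
  exact List.ofFn_injective
    (hm.eq_of_pairwise' hanti.sortedGE_ofFn.pairwise hanti'.sortedGE_ofFn.pairwise)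

/-- Autonne–Takagi factorization with ordered singular values.
Every symmetric complex `m × m` matrix `E` can be written as `U * E * Uᵀ = D(λ)` with `U`
unitary and `λ` a nonincreasing nonnegative real vector; moreover `λ` is unique. -/
theorem takagi_factorization_exists_unique_lambda (m : ℕ) (hm : 1 ≤ m)
    (E : Matrix (Fin m) (Fin m) ℂ) (hE : Eᵀ = E) :
    (∃ (U : Matrix (Fin m) (Fin m) ℂ) (lam : Fin m → ℝ),
        Uᴴ * U = 1 ∧
        (∀ i j : Fin m, i ≤ j → lam j ≤ lam i) ∧ (∀ i, 0 ≤ lam i) ∧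
        U * E * Uᵀ = Matrix.diagonal fun i => (lam i : ℂ)) ∧
    (∀ (U U' : Matrix (Fin m) (Fin m) ℂ) (lam lam' : Fin m → ℝ),
        Uᴴ * U = 1 → U'ᴴ * U' = 1 →
        (∀ i j : Fin m, i ≤ j → lam j ≤ lam i) → (∀ i, 0 ≤ lam i) →
        (∀ i j : Fin m, i ≤ j → lam' j ≤ lam' i) → (∀ i, 0 ≤ lam' i) →
        U * E * Uᵀ = Matrix.diagonal (fun i => (lam i : ℂ)) →
        U' * E * U'ᵀ = Matrix.diagonal (fun i => (lam' i : ℂ)) →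
        lam = lam') := by
  exact ⟨takagi_existence E hE, fun U U' lam lam' hU hU' ha h0 ha' h0' h h' =>
    eq_of_prod_X_sub_C_sq_eq ha h0 ha' h0' ((takagi_charpoly hU h).symm.trans (takagi_charpoly hU' h'))⟩
end

section
/- Let m ≥ 1 and let E be a symmetric m×m complex matrix. Then the matrix E·Ē is Hermitian and positive semidefinite, and if U is unitary and λ = (λ₁,…,λ_m) has nonincreasing nonnegative entries with U E Uᵀ = D_m(λ), then the characteristic polynomial of E·Ē equals ∏_{j=1}^m (X − λ_j²); that is, the numbers λ_j² are exactly the eigenvalues of E·Ē counted with multiplicity. -/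
/-!
Since `E` is symmetric, `Ē = Eᴴ`, so `E * Ē = E * Eᴴ` is Hermitian and positive semidefinite.
If `U * E * Uᵀ = D` with `U` unitary and `D` real diagonal, then
`D ^ 2 = D * Dᴴ = U * (E * Eᴴ) * Uᴴ`, so `E * Eᴴ` is similar to `D ^ 2` and has the same
characteristic polynomial.
-/

open Matrix Polynomial ComplexOrder

/-- For a symmetric complex matrix `E`, the matrix `E * Ē` is Hermitian and
positive semidefinite, and if `U * E * Uᵀ = D(λ)` with `U` unitary and `λ` nonincreasing and
nonnegative, then the characteristic polynomial of `E * Ē` is `∏ⱼ (X - λⱼ²)`. -/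
theorem charpoly_of_EEbar (m : ℕ) (hm : 1 ≤ m)
    (E : Matrix (Fin m) (Fin m) ℂ) (hE : Eᵀ = E) :
    (E * E.map (starRingEnd ℂ)).IsHermitian ∧
    (E * E.map (starRingEnd ℂ)).PosSemidef ∧
    ∀ (U : Matrix (Fin m) (Fin m) ℂ) (lam : Fin m → ℝ),
      Uᴴ * U = 1 →
      (∀ i j : Fin m, i ≤ j → lam j ≤ lam i) → (∀ i, 0 ≤ lam i) →
      U * E * Uᵀ = Matrix.diagonal (fun i => (lam i : ℂ)) →
      (E * E.map (starRingEnd ℂ)).charpoly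
        = ∏ j : Fin m, (Polynomial.X - Polynomial.C ((lam j : ℂ) ^ 2)) := by
  -- Symmetry of `E` turns the entrywise conjugate into the conjugate transpose, so the
  -- matrix in question is `E * Eᴴ`.
  have hbar : E.map (starRingEnd ℂ) = Eᴴ := by
    conv_lhs => rw [← hE]
    rfl
  rw [hbar]
  refine ⟨isHermitian_mul_conjTranspose_self E, posSemidef_self_mul_conjTranspose E, ?_⟩
  intro U lam hU _ _ hD
  have hUt : Uᵀ * Uᵀᴴ = 1 := by
    have h := congrArg transpose hU
    rwa [transpose_mul, transpose_one] at h
  -- Multiplying `U * E * Uᵀ = D` by its conjugate transpose cancels `Uᵀ` in the middle.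
  have hsq : U * (E * Eᴴ * Uᴴ) = diagonal (fun i => (lam i : ℂ) ^ 2) := by
    calc U * (E * Eᴴ * Uᴴ) = U * E * (Uᵀ * Uᵀᴴ) * Eᴴ * Uᴴ := by
          rw [hUt]; simp only [Matrix.mul_one, Matrix.mul_assoc]
      _ = (U * E * Uᵀ) * (U * E * Uᵀ)ᴴ := by
          simp only [conjTranspose_mul, Matrix.mul_assoc]
      _ = diagonal (fun i => (lam i : ℂ) ^ 2) := by
          rw [hD, diagonal_conjTranspose, diagonal_mul_diagonal]
          congr 1
          funext i
          simp [sq]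
  calc (E * Eᴴ).charpoly = (E * Eᴴ * Uᴴ * U).charpoly := by
        rw [Matrix.mul_assoc _ Uᴴ U, hU, Matrix.mul_one]
    _ = (U * (E * Eᴴ * Uᴴ)).charpoly := charpoly_mul_comm _ _
    _ = _ := by rw [hsq, charpoly_diagonal]
end

section
/- Let m ≥ 1 and let λ = (λ₁,…,λ_m) ∈ ℝ^m satisfy λ₁ ≥ … ≥ λ_m ≥ 0. A unitary matrix U ∈ M_m(ℂ) satisfies U D_m(λ) Uᵀ = D_m(λ) if and only if: (1) U_{ij} = 0 whenever λ_i ≠ λ_j, and (2) U_{ij} is real whenever λ_i = λ_j ≠ 0. (Equivalently, U is block diagonal with respect to the partition of indices by the value of λ, with a real orthogonal block for each distinct nonzero value of λ and a unitary block on the indices where λ vanishes.) -/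
/-!
Since `U` is unitary, `Uᵀ` has inverse the entrywise conjugate `Uᴴᵀ`, so `U D Uᵀ = D` is
equivalent to `U D = D Uᴴᵀ`, that is, to the entrywise equations `U i j * λ j = λ i * conj (U i j)`.
Each of them can be analysed separately: taking norms gives `|U i j| λ j = λ i |U i j|` because
`λ ≥ 0`, so `U i j = 0` when `λ i ≠ λ j`; when `λ i = λ j ≠ 0` it says `U i j = conj (U i j)`;
and when `λ i = λ j = 0` it is vacuous.
-/

open Matrix

theorem stabilizer_iff_entrywise {n : Type*} [Fintype n] [DecidableEq n] (d : n → ℂ)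
    (U : Matrix n n ℂ) (hU : Uᴴ * U = 1) :
    U * Matrix.diagonal d * Uᵀ = Matrix.diagonal d ↔
      ∀ i j, U i j * d j = d i * star (U i j) := by
  have h1 : Uᵀ * Uᴴᵀ = 1 := by rw [← Matrix.transpose_mul, hU, Matrix.transpose_one]
  have h2 : Uᴴᵀ * Uᵀ = 1 := mul_eq_one_comm.mp h1
  have h3 : U * Matrix.diagonal d * Uᵀ = Matrix.diagonal d ↔
      U * Matrix.diagonal d = Matrix.diagonal d * Uᴴᵀ := by
    constructor
    · intro h
      rw [← h, Matrix.mul_assoc _ Uᵀ, h1, Matrix.mul_one, h]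
    · intro h
      rw [h, Matrix.mul_assoc, h2, Matrix.mul_one]
  rw [h3, ← Matrix.ext_iff]
  simp [Matrix.mul_diagonal, Matrix.diagonal_mul]

theorem entry_eq_iff {a b : ℝ} (ha : 0 ≤ a) (hb : 0 ≤ b) (z : ℂ) :
    z * b = a * star z ↔ (a ≠ b → z = 0) ∧ (a = b → a ≠ 0 → z.im = 0) := by
  constructor
  · intro h
    refine ⟨fun hab => ?_, ?_⟩
    · by_contra hz
      have hn := congrArg norm h
      rw [norm_mul, norm_mul, norm_star, Complex.norm_of_nonneg ha, Complex.norm_of_nonneg hb,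
        mul_comm] at hn
      exact hab (mul_right_cancel₀ (norm_ne_zero_iff.mpr hz) hn).symm
    · rintro rfl h0
      rw [mul_comm] at h
      exact Complex.conj_eq_iff_im.mp (mul_left_cancel₀ (Complex.ofReal_ne_zero.mpr h0) h).symm
  · rintro ⟨h1, h2⟩
    by_cases hab : a = b
    · subst hab
      by_cases h0 : a = 0
      · simp [h0]
      · rw [mul_comm, show star z = z from Complex.conj_eq_iff_im.mpr (h2 rfl h0)]
    · simp [h1 hab]

/-- stabilizer of a diagonal form under `U ↦ U D Uᵀ`.
A unitary `U` satisfies `U * D(λ) * Uᵀ = D(λ)` iff `U i j = 0` whenever `λ i ≠ λ j` and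
`U i j` is real whenever `λ i = λ j ≠ 0`. -/
theorem stabilizer_of_diagonal_form (m : ℕ) (hm : 1 ≤ m)
    (lam : Fin m → ℝ)
    (hmono : ∀ i j : Fin m, i ≤ j → lam j ≤ lam i) (hpos : ∀ i, 0 ≤ lam i)
    (U : Matrix (Fin m) (Fin m) ℂ) (hU : Uᴴ * U = 1) :
    U * Matrix.diagonal (fun i => (lam i : ℂ)) * Uᵀ = Matrix.diagonal (fun i => (lam i : ℂ))
      ↔ (∀ i j : Fin m, lam i ≠ lam j → U i j = 0) ∧
        (∀ i j : Fin m, lam i = lam j → lam i ≠ 0 → (U i j).im = 0) := by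
  rw [stabilizer_iff_entrywise _ U hU]
  simp only [fun i j => entry_eq_iff (hpos i) (hpos j) (U i j), forall_and]
end

section
/- Let n ≥ 2, let Ĩ ∈ M_n(ℂ) be the block matrix with upper-left (n−1)×(n−1) block the identity and all other blocks zero, let a be a nonzero real number, and let B ∈ M_n(ℂ) be invertible with a·(B Ĩ Bᴴ) = Ĩ. Then a > 0, the lower-left 1×(n−1) block of B is zero (so B = fromBlocks(V, c, 0, d) for some V ∈ M_{n−1}(ℂ), column c ∈ ℂ^{n−1} and scalar d), the lower-right entry d of B is nonzero, and a·(V Vᴴ) equals the (n−1)×(n−1) identity (so that √a·V is unitary). -/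
/-!
Writing `B = fromBlocks V c g d`, one has `B Ĩ Bᴴ = fromBlocks (V Vᴴ) (V gᴴ) (g Vᴴ) (g gᴴ)`.
Comparing blocks, `a • (V Vᴴ) = 1` and `g gᴴ = 0`, hence `g = 0`. A diagonal entry of the first
identity reads `a ∑ⱼ |V₀ⱼ|² = 1`, which forces `a > 0`, and `det B = det V * d` gives `d ≠ 0`.
-/

open Matrix

/-- Let `n = m + 1 ≥ 2` (so `m ≥ 1`) and let `Ĩ` be the `n × n` block matrix
with upper-left `(n-1) × (n-1)` block the identity and all other blocks zero.  If `a` is a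
nonzero real and `B` is invertible with `a • (B * Ĩ * Bᴴ) = Ĩ`, then `a > 0`, the lower-left
block of `B` vanishes, the lower-right entry `d` of `B` is nonzero, and `a • (V * Vᴴ) = 1`
for the upper-left block `V` of `B` (so `√a • V` is unitary). -/
theorem block_form_of_levi_preserving (m : ℕ) (hm : 1 ≤ m) (a : ℝ) (ha : a ≠ 0)
    (B : Matrix (Fin m ⊕ Fin 1) (Fin m ⊕ Fin 1) ℂ) (hB : IsUnit B)
    (hEq : (a : ℂ) • (B * Matrix.fromBlocks 1 0 0 0 * Bᴴ) = Matrix.fromBlocks 1 0 0 0) :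
    0 < a ∧
    B.toBlocks₂₁ = 0 ∧
    B (Sum.inr 0) (Sum.inr 0) ≠ 0 ∧
    (a : ℂ) • (B.toBlocks₁₁ * B.toBlocks₁₁ᴴ) = 1 := by
  have haC : (a : ℂ) ≠ 0 := by exact_mod_cast ha
  obtain ⟨V, c, g, d, rfl⟩ : ∃ V c g d, B = fromBlocks V c g d :=
    ⟨_, _, _, _, (fromBlocks_toBlocks B).symm⟩
  rw [fromBlocks_conjTranspose, fromBlocks_multiply, fromBlocks_multiply, fromBlocks_smul,
    fromBlocks_inj] at hEq
  obtain ⟨h11, -, -, h22⟩ := hEq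
  simp only [Matrix.mul_one, Matrix.mul_zero, Matrix.zero_mul, add_zero] at h11 h22
  have hg : g = 0 := by
    open scoped ComplexOrder in
    exact self_mul_conjTranspose_eq_zero.mp ((smul_eq_zero.mp h22).resolve_left haC)
  subst hg
  simp only [toBlocks_fromBlocks₁₁, toBlocks_fromBlocks₂₁, fromBlocks_apply₂₂]
  refine ⟨?_, trivial, ?_, h11⟩
  · have h0 := congrArg Complex.re (congrFun (congrFun h11 ⟨0, hm⟩) ⟨0, hm⟩)
    simp only [Matrix.smul_apply, mul_apply, conjTranspose_apply, one_apply_eq, smul_eq_mul,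
      RCLike.star_def, Complex.mul_conj, ← Complex.ofReal_sum, ← Complex.ofReal_mul,
      Complex.ofReal_re, Complex.one_re] at h0
    exact pos_of_mul_pos_left (one_pos.trans_eq h0.symm)
      (Finset.sum_nonneg fun j _ => Complex.normSq_nonneg _)
  · intro hd
    have hdet := (isUnit_iff_isUnit_det _).mp hB
    rw [det_fromBlocks_zero₂₁, det_fin_one, hd, mul_zero] at hdet
    exact not_isUnit_zero hdet
end

section
/- Let n > 2 and let H ∈ M_n(ℂ) be symmetric. Then there exists an admissible transformation taking H to one of the following normal forms: (i) fromBlocks(D_{n−1}(λ), e, eᵀ, 0), where e ∈ ℂ^{n−1} is the last standard basis column vector and either λ₁ = 1, 1 ≥ λ₂ ≥ … ≥ λ_{n−2} ≥ 0 and λ_{n−1} = 0, or λ = 0; (ii) fromBlocks(D_{n−1}(λ), 0, 0, 0), where either λ₁ = 1 ≥ λ₂ ≥ … ≥ λ_{n−1} ≥ 0 or λ = 0; (iii) fromBlocks(D_{n−1}(λ), 0, 0, 1), where either λ₁ = 1 ≥ λ₂ ≥ … ≥ λ_{n−1} ≥ 0 or λ = 0. -/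
/-!
Write `H = [[A, b], [bᵀ, δ]]`. With `a = r ^ 2` and `V = r⁻¹ U`, `U` unitary, an admissible
transformation acts on the blocks as in `isAdmissibleImage_of_unitary`.

* If `δ ≠ 0`, the column `c = -δ⁻¹ U b` removes the off-diagonal blocks and replaces `A` by its Schur
  complement `A - δ⁻¹ b bᵀ`. The Takagi factorization (`takagi`) diagonalizes it, `‖d‖` normalizes
  the largest singular value, and the phase of `d` together with `r` turns the corner into `1`.
* If `δ = 0` and `b = 0`, the Takagi factorization of `A` and a rescaling by `d` suffice.
* If `δ = 0` and `b ≠ 0`, take `U` sending `b` to a positive multiple of the last basis vector `e`.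
  The column `c` changes `U A Uᵀ` by a term `c eᵀ + e cᵀ`, which clears its last row and column; the
  unitary matrices fixing `e` still allow a Takagi factorization of the remaining block
  (`exists_unitary_corner`).

The Takagi factorization `U A Uᵀ = diag(s)`, `s ≥ 0`, of a complex symmetric `A` is proved by
induction on the size, splitting off a unit vector `x` with `A x = s conj(x)`
(`exists_unit_coneigenvector`).
-/

open Matrix

/-- An admissible transformation `H ↦ (a·conj d) • (B * H * Bᵀ)`, where
`B = fromBlocks V c 0 d` with `d ≠ 0`, `a > 0` real and `a • (V * Vᴴ) = 1`.
`IsAdmissibleImage m H K` says that `K` is the image of `H` under some such transformation. -/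
def IsAdmissibleImage (m : ℕ)
    (H K : Matrix (Fin m ⊕ Fin 1) (Fin m ⊕ Fin 1) ℂ) : Prop :=
  ∃ (a : ℝ) (d : ℂ) (V : Matrix (Fin m) (Fin m) ℂ) (c : Matrix (Fin m) (Fin 1) ℂ),
    0 < a ∧ d ≠ 0 ∧ (a : ℂ) • (V * Vᴴ) = 1 ∧
    K = ((a : ℂ) * (starRingEnd ℂ) d) •
      (Matrix.fromBlocks V c 0 (Matrix.of fun _ _ => d) * H *
        (Matrix.fromBlocks V c 0 (Matrix.of fun _ _ => d))ᵀ)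

/-- The last standard basis vector of `ℂ^m`, as a column. -/
def lastCol (m : ℕ) : Matrix (Fin m) (Fin 1) ℂ :=
  Matrix.of fun i _ => if (i : ℕ) = m - 1 then 1 else 0

/-- The normal forms (i), (ii), (iii) of Theorem 5.8 (here `m = n - 1`). -/
def IsNormalForm (m : ℕ) (hm : 2 ≤ m)
    (K : Matrix (Fin m ⊕ Fin 1) (Fin m ⊕ Fin 1) ℂ) : Prop :=
  -- (i)  fromBlocks (D λ) e eᵀ 0, with λ₁ = 1 ≥ λ₂ ≥ … ≥ λ_{m-1} ≥ 0, λ_m = 0, or λ = 0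
  (∃ lam : Fin m → ℝ,
      ((lam ⟨0, by omega⟩ = 1 ∧ (∀ i j : Fin m, i ≤ j → lam j ≤ lam i) ∧
          (∀ i, 0 ≤ lam i) ∧ lam ⟨m - 1, by omega⟩ = 0) ∨ (∀ i, lam i = 0)) ∧
      K = Matrix.fromBlocks (Matrix.diagonal fun i => (lam i : ℂ))
            (lastCol m) (lastCol m)ᵀ 0) ∨
  -- (ii)  fromBlocks (D λ) 0 0 0, with λ₁ = 1 ≥ λ₂ ≥ … ≥ λ_m ≥ 0, or λ = 0
  (∃ lam : Fin m → ℝ,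
      ((lam ⟨0, by omega⟩ = 1 ∧ (∀ i j : Fin m, i ≤ j → lam j ≤ lam i) ∧
          (∀ i, 0 ≤ lam i)) ∨ (∀ i, lam i = 0)) ∧
      K = Matrix.fromBlocks (Matrix.diagonal fun i => (lam i : ℂ)) 0 0 0) ∨
  -- (iii)  fromBlocks (D λ) 0 0 1, with λ₁ = 1 ≥ λ₂ ≥ … ≥ λ_m ≥ 0, or λ = 0
  (∃ lam : Fin m → ℝ,
      ((lam ⟨0, by omega⟩ = 1 ∧ (∀ i j : Fin m, i ≤ j → lam j ≤ lam i) ∧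
          (∀ i, 0 ≤ lam i)) ∨ (∀ i, lam i = 0)) ∧
      K = Matrix.fromBlocks (Matrix.diagonal fun i => (lam i : ℂ)) 0 0 1)

/-! ### Takagi factorization -/

/-- Any unit vector is a prescribed row of some unitary matrix. -/
lemma exists_unitary_row {ι : Type*} [Fintype ι] [DecidableEq ι] (x : ι → ℂ)
    (hx : x ⬝ᵥ star x = 1) (i : ι) :
    ∃ U : Matrix ι ι ℂ, U * Uᴴ = 1 ∧ U i = x := by
  have hon : Orthonormal ℂ (({i} : Set ι).domRestrict (fun _ : ι => WithLp.toLp 2 x)) := by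
    rw [orthonormal_iff_ite]
    rintro ⟨j, rfl⟩ ⟨k, rfl⟩
    rw [if_pos rfl, ← hx]
    exact EuclideanSpace.inner_eq_star_dotProduct _ _
  obtain ⟨v, hv⟩ := hon.exists_orthonormalBasis_extension_of_card_eq
    (by simp)
  refine ⟨Matrix.of fun j k => v j k, ?_, ?_⟩
  · ext j k
    have h := orthonormal_iff_ite.1 v.orthonormal k j
    rw [EuclideanSpace.inner_eq_star_dotProduct] at h
    rw [Matrix.one_apply, Matrix.mul_apply]
    simp only [eq_comm (a := j)]
    rw [← h]
    rfl
  · ext k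
    simp [hv i rfl]

lemma exists_norm_sq {ι : Type*} [Fintype ι] (x : ι → ℂ) (hx : x ≠ 0) :
    ∃ N : ℝ, 0 < N ∧ x ⬝ᵥ star x = (N : ℂ) ^ 2 := by
  have hn : 0 < ‖WithLp.toLp 2 x‖ := by simpa using hx
  have hxx : x ⬝ᵥ star x = ((‖WithLp.toLp 2 x‖ : ℝ) : ℂ) ^ 2 := by
    have := inner_self_eq_norm_sq_to_K (𝕜 := ℂ) (WithLp.toLp 2 x)
    rw [EuclideanSpace.inner_eq_star_dotProduct] at this
    simpa using this
  exact ⟨_, hn, hxx⟩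

open scoped ComplexOrder in
/-- A complex symmetric matrix has a unit coneigenvector with nonnegative coneigenvalue.
If `Aᴴ A y = l y` with `y ≠ 0`, then `conj (A y) + √l y` is one up to scaling when it is nonzero;
when it vanishes, `I y` is one. -/
lemma exists_unit_coneigenvector {ι : Type*} [Fintype ι] [DecidableEq ι] [Nonempty ι]
    (A : Matrix ι ι ℂ) (hA : Aᵀ = A) :
    ∃ (x : ι → ℂ) (s : ℝ), 0 ≤ s ∧ x ⬝ᵥ star x = 1 ∧ A *ᵥ x = (s : ℂ) • star x := by
  obtain ⟨x, s, hs, hx, hAx⟩ : ∃ (x : ι → ℂ) (s : ℝ), 0 ≤ s ∧ x ≠ 0 ∧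
      A *ᵥ x = (s : ℂ) • star x := by
    have hP := Matrix.posSemidef_conjTranspose_mul_self A
    let j : ι := Classical.arbitrary ι
    set y : ι → ℂ := (hP.isHermitian.eigenvectorBasis j).ofLp with hy
    have hy0 : y ≠ 0 := by
      intro h
      apply hP.isHermitian.eigenvectorBasis.orthonormal.ne_zero j
      ext k
      exact congrFun h k
    set l := hP.isHermitian.eigenvalues j with hl
    have hl0 : 0 ≤ l := hP.eigenvalues_nonneg j
    have hev : (Aᴴ * A) *ᵥ y = (l : ℂ) • y := by
      have := hP.isHermitian.mulVec_eigenvectorBasis j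
      rw [this]
      ext k
      simp [hy, hl]
    have hsq : ((√l : ℝ) : ℂ) * ((√l : ℝ) : ℂ) = l := by
      rw [← Complex.ofReal_mul, Real.mul_self_sqrt hl0]
    -- Conjugating `Aᴴ A y = l y` and using symmetry of `A`.
    have hc : A *ᵥ star (A *ᵥ y) = (l : ℂ) • star y := by
      have h := congrArg star hev
      rw [← Matrix.mulVec_mulVec, Matrix.star_mulVec, Matrix.conjTranspose_conjTranspose,
        ← Matrix.mulVec_transpose, hA] at h
      rw [h]
      ext k
      simp
    by_cases h0 : star (A *ᵥ y) + ((√l : ℝ) : ℂ) • y = 0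
    · refine ⟨Complex.I • y, √l, Real.sqrt_nonneg _, by simpa using hy0, ?_⟩
      have h1 : A *ᵥ y = -(((√l : ℝ) : ℂ) • star y) := by
        have := congrArg star (eq_neg_of_add_eq_zero_left h0)
        rw [star_star] at this
        rw [this]
        ext k
        simp
      rw [Matrix.mulVec_smul, h1]
      ext k
      simp
      ring
    · refine ⟨_, √l, Real.sqrt_nonneg _, h0, ?_⟩
      rw [Matrix.mulVec_add, Matrix.mulVec_smul, hc, ← hsq]
      ext k
      simp
      ring
  obtain ⟨N, hn, hxx⟩ := exists_norm_sq x hx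
  have hN : (N : ℂ) ≠ 0 := by exact_mod_cast hn.ne'
  refine ⟨((N : ℂ)⁻¹) • x, s, hs, ?_, ?_⟩
  · simp [star_smul, hxx]
    field_simp
  · rw [Matrix.mulVec_smul, hAx]
    ext k
    simp
    ring

/-- Takagi factorization, with unsorted diagonal: a unitary matrix whose first row is a unit
coneigenvector splits off a `1 × 1` block. -/
lemma takagi_fin (n : ℕ) (A : Matrix (Fin n) (Fin n) ℂ) (hA : Aᵀ = A) :
    ∃ (U : Matrix (Fin n) (Fin n) ℂ) (s : Fin n → ℝ), U * Uᴴ = 1 ∧ (∀ i, 0 ≤ s i) ∧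
      U * A * Uᵀ = diagonal fun i => (s i : ℂ) := by
  induction n with
  | zero => exact ⟨1, 0, by simp, by simp, Subsingleton.elim _ _⟩
  | succ n ih =>
    obtain ⟨x, s, hs, hx, hAx⟩ := exists_unit_coneigenvector A hA
    obtain ⟨U, hU, hUx⟩ := exists_unitary_row x hx 0
    set C := U * A * Uᵀ with hC
    have hCt : Cᵀ = C := by simp [hC, Matrix.transpose_mul, hA, Matrix.mul_assoc]
    have hrow : ∀ j, C j 0 = if j = 0 then (s : ℂ) else 0 := by
      intro j
      have h1 : C j 0 = (U *ᵥ (A *ᵥ x)) j := by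
        rw [Matrix.mulVec_mulVec, hC]
        simp [Matrix.mul_apply, Matrix.mulVec, dotProduct, hUx]
      have h2 : (U *ᵥ star x) j = (U * Uᴴ) j 0 := by
        simp [Matrix.mul_apply, Matrix.mulVec, dotProduct, hUx]
      rw [h1, hAx, Matrix.mulVec_smul, Pi.smul_apply, h2, hU, Matrix.one_apply]
      simp
    obtain ⟨W, t, hW, ht, hWt⟩ := ih (C.submatrix Fin.succ Fin.succ) (by
      rw [Matrix.transpose_submatrix, hCt])
    let Q : Matrix (Fin (n+1)) (Fin (n+1)) ℂ :=
      Matrix.of (Fin.cons (Fin.cons 1 0) fun i => Fin.cons 0 (W i))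
    have hQ : Q * Qᴴ = 1 := by
      ext i j
      have h := fun i j => congrFun (congrFun hW i) j
      simp only [Matrix.mul_apply, Matrix.conjTranspose_apply, Matrix.one_apply,
        RCLike.star_def] at h
      refine Fin.cases ?_ (fun i => ?_) i <;> refine Fin.cases ?_ (fun j => ?_) j <;>
        simp [Q, Matrix.mul_apply, Fin.sum_univ_succ, Matrix.one_apply, h,
          (Fin.succ_ne_zero _).symm]
    refine ⟨Q * U, Fin.cons s t, ?_, ?_, ?_⟩
    · rw [Matrix.conjTranspose_mul, Matrix.mul_assoc, ← Matrix.mul_assoc U, hU, Matrix.one_mul, hQ]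
    · intro i
      refine Fin.cases ?_ (fun i => ?_) i <;> simp [hs, ht]
    · have : Q * U * A * (Q * U)ᵀ = Q * C * Qᵀ := by
        simp [hC, Matrix.transpose_mul, Matrix.mul_assoc]
      rw [this]
      have hrow' : ∀ j, C 0 j = if j = 0 then (s : ℂ) else 0 := by
        intro j; rw [← hrow j]; exact congrFun (congrFun hCt j) 0
      ext i j
      have h := fun i j => congrFun (congrFun hWt i) j
      simp only [Matrix.mul_apply, Matrix.transpose_apply, Matrix.submatrix_apply] at h
      refine Fin.cases ?_ (fun i => ?_) i <;> refine Fin.cases ?_ (fun j => ?_) j <;>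
        simp [Q, Matrix.mul_apply, Fin.sum_univ_succ, Matrix.diagonal_apply, h, hrow, hrow',
          (Fin.succ_ne_zero _).symm]

/-- Takagi factorization with the diagonal sorted in decreasing order. -/
lemma takagi (n : ℕ) (A : Matrix (Fin n) (Fin n) ℂ) (hA : Aᵀ = A) :
    ∃ (U : Matrix (Fin n) (Fin n) ℂ) (s : Fin n → ℝ), U * Uᴴ = 1 ∧ (∀ i, 0 ≤ s i) ∧
      Antitone s ∧ U * A * Uᵀ = diagonal fun i => (s i : ℂ) := by
  obtain ⟨U, s, hU, hs, h⟩ := takagi_fin n A hA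
  let p := Tuple.sort (fun i => - s i)
  refine ⟨U.submatrix p id, s ∘ p, ?_, fun i => hs _, ?_, ?_⟩
  · have : U.submatrix p id * (U.submatrix p id)ᴴ = (U * Uᴴ).submatrix p p := by
      ext i j; simp [Matrix.mul_apply]
    rw [this, hU]
    simp
  · intro i j hij
    have := Tuple.monotone_sort (fun i => - s i) hij
    simpa using this
  · have : U.submatrix p id * A * (U.submatrix p id)ᵀ = (U * A * Uᵀ).submatrix p p := by
      ext i j; simp [Matrix.mul_apply]
    rw [this, h]
    ext i j
    simp [Matrix.diagonal_apply]

/-! ### Factorization relative to a vector -/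

/-- Takagi factorization relative to a nonzero vector `b`: a unitary `U` sending `b` to a positive
multiple of the last basis vector `e` and making `U A Uᵀ` diagonal up to a term `c eᵀ + e cᵀ`, with
vanishing last diagonal entry. -/
lemma exists_unitary_corner (k : ℕ) (A : Matrix (Fin (k + 1)) (Fin (k + 1)) ℂ) (hA : Aᵀ = A)
    (b : Fin (k + 1) → ℂ) (hb : b ≠ 0) :
    ∃ (U : Matrix (Fin (k + 1)) (Fin (k + 1)) ℂ) (c : Fin (k + 1) → ℂ) (s : Fin (k + 1) → ℝ)
      (N : ℝ), U * Uᴴ = 1 ∧ 0 < N ∧ (∀ i, 0 ≤ s i) ∧ Antitone s ∧ s (Fin.last k) = 0 ∧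
      U *ᵥ b = (N : ℂ) • Pi.single (Fin.last k) 1 ∧
      U * A * Uᵀ + vecMulVec c (Pi.single (Fin.last k) 1) +
        vecMulVec (Pi.single (Fin.last k) 1) c = diagonal fun i => (s i : ℂ) := by
  obtain ⟨N, hN, hbN⟩ := exists_norm_sq b hb
  have hN' : (N : ℂ) ≠ 0 := by exact_mod_cast hN.ne'
  have hunit : ((N : ℂ)⁻¹ • star b) ⬝ᵥ star ((N : ℂ)⁻¹ • star b) = 1 := by
    simp [star_smul, dotProduct_comm (star b), hbN]
    field_simp
  obtain ⟨U, hU, hUx⟩ := exists_unitary_row _ hunit (Fin.last k)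
  set C := U * A * Uᵀ with hC
  have hCt : Cᵀ = C := by simp [hC, Matrix.transpose_mul, hA, Matrix.mul_assoc]
  have hUb : U *ᵥ b = (N : ℂ) • Pi.single (Fin.last k) 1 := by
    ext j
    have h2 : (U *ᵥ b) j = (N : ℂ) * (U * Uᴴ) j (Fin.last k) := by
      simp only [Matrix.mul_apply, Matrix.mulVec, dotProduct, hUx, Matrix.conjTranspose_apply,
        Finset.mul_sum]
      refine Finset.sum_congr rfl fun l _ => ?_
      simp
      field_simp
    rw [h2, hU]
    simp [Matrix.one_apply, Pi.single_apply]
  obtain ⟨W, t, hW, ht, htm, hWt⟩ := takagi k (C.submatrix Fin.castSucc Fin.castSucc) (by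
    rw [Matrix.transpose_submatrix, hCt])
  let Q : Matrix (Fin (k + 1)) (Fin (k + 1)) ℂ :=
    Matrix.of (Fin.snoc (α := fun _ => Fin (k + 1) → ℂ)
      (fun i => Fin.snoc (α := fun _ => ℂ) (W i) 0) (Fin.snoc (α := fun _ => ℂ) 0 1))
  have hQ : Q * Qᴴ = 1 := by
    ext i j
    have h := fun i j => congrFun (congrFun hW i) j
    simp only [Matrix.mul_apply, Matrix.conjTranspose_apply, Matrix.one_apply,
      RCLike.star_def] at h
    refine Fin.lastCases ?_ (fun i => ?_) i <;> refine Fin.lastCases ?_ (fun j => ?_) j <;>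
      simp [Q, Matrix.mul_apply, Fin.sum_univ_castSucc, Matrix.one_apply, h,
        (Fin.castSucc_ne_last _).symm]
  set C' := Q * C * Qᵀ with hC'
  have hC't : ∀ i j, C' j i = C' i j := fun i j => by
    have : C'ᵀ = C' := by simp [hC', Matrix.transpose_mul, hCt, Matrix.mul_assoc]
    exact congrFun (congrFun this i) j
  have hQe : Q *ᵥ Pi.single (Fin.last k) 1 = Pi.single (Fin.last k) 1 := by
    ext j
    refine Fin.lastCases ?_ (fun j => ?_) j <;> simp [Q]
  have hcorner : ∀ i j : Fin k, C' i.castSucc j.castSucc = if i = j then (t i : ℂ) else 0 := by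
    intro i j
    have h := congrFun (congrFun hWt i) j
    simp only [Matrix.mul_apply, Matrix.transpose_apply, Matrix.submatrix_apply,
      Matrix.diagonal_apply] at h
    rw [← h]
    simp [hC', Q, Matrix.mul_apply, Fin.sum_univ_castSucc]
  -- The off-corner part of `C'` is a symmetrised product with the last basis vector;
  -- the corner entry is counted twice, hence halved.
  let c : Fin (k + 1) → ℂ :=
    Fin.snoc (α := fun _ => ℂ) (fun i => -C' i.castSucc (Fin.last k))
      (-C' (Fin.last k) (Fin.last k) / 2)
  refine ⟨Q * U, c, Fin.snoc (α := fun _ => ℝ) t 0, N, ?_, hN, ?_, ?_, by simp, ?_, ?_⟩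
  · rw [Matrix.conjTranspose_mul, Matrix.mul_assoc, ← Matrix.mul_assoc U, hU, Matrix.one_mul, hQ]
  · intro i
    refine Fin.lastCases ?_ (fun i => ?_) i <;> simp [ht]
  · intro i j
    refine Fin.lastCases ?_ (fun i => ?_) i <;> refine Fin.lastCases ?_ (fun j => ?_) j
    · simp
    · intro h
      exact absurd (lt_of_le_of_lt h (Fin.castSucc_lt_last j)) (lt_irrefl _)
    · simp [ht]
    · intro h
      simpa using htm (Fin.castSucc_le_castSucc_iff.1 h)
  · rw [← Matrix.mulVec_mulVec, hUb, Matrix.mulVec_smul, hQe]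
  · have : Q * U * A * (Q * U)ᵀ = C' := by
      simp [hC', hC, Matrix.transpose_mul, Matrix.mul_assoc]
    rw [this]
    ext i j
    refine Fin.lastCases ?_ (fun i => ?_) i <;> refine Fin.lastCases ?_ (fun j => ?_) j
    · simp [c, vecMulVec_apply]
      ring
    · simp [c, vecMulVec_apply, hC't j.castSucc, (Fin.castSucc_ne_last _).symm]
    · simp [c, vecMulVec_apply]
    · simp [vecMulVec_apply, hcorner, Matrix.diagonal_apply]

/-! ### Admissible images and normal forms -/

lemma exists_normalizing_scale {k : ℕ} (s : Fin (k + 1) → ℝ) (hs : ∀ i, 0 ≤ s i)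
    (hanti : Antitone s) :
    ∃ r : ℝ, 0 < r ∧ (r * s 0 = 1 ∨ ∀ i, s i = 0) := by
  rcases (hs 0).eq_or_lt with h | h
  · exact ⟨1, one_pos, Or.inr fun i => le_antisymm (h ▸ hanti (Fin.zero_le i)) (hs i)⟩
  · exact ⟨(s 0)⁻¹, inv_pos.2 h, Or.inl (inv_mul_cancel₀ h.ne')⟩

/-- The block form of an admissible image, parametrized by a unitary `U` and `r > 0` through
`a = r ^ 2` and `V = r⁻¹ U`; the column of the transformation is `r⁻¹ c`. -/
lemma isAdmissibleImage_of_unitary {m : ℕ} (A U : Matrix (Fin m) (Fin m) ℂ)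
    (b c : Matrix (Fin m) (Fin 1) ℂ) (e d : ℂ) (r : ℝ) (hr : 0 < r) (hd : d ≠ 0)
    (hU : U * Uᴴ = 1) :
    IsAdmissibleImage m (fromBlocks A b bᵀ (Matrix.of fun _ _ => e))
      (fromBlocks
        ((starRingEnd ℂ) d • (U * A * Uᵀ + c * (U * b)ᵀ + U * b * cᵀ + e • (c * cᵀ)))
        (((r : ℂ) * (starRingEnd ℂ) d * d) • (U * b + e • c))
        (((r : ℂ) * (starRingEnd ℂ) d * d) • (U * b + e • c))ᵀ
        (Matrix.of fun _ _ => (r : ℂ) ^ 2 * (starRingEnd ℂ) d * d ^ 2 * e)) := by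
  have hr' : (r : ℂ) ≠ 0 := by exact_mod_cast hr.ne'
  have hcol : ∀ (x : Matrix (Fin m) (Fin 1) ℂ) (z : ℂ),
      x * (Matrix.of fun _ _ => z : Matrix (Fin 1) (Fin 1) ℂ) = z • x := by
    intro x z; ext i j; simp [Matrix.mul_apply, Subsingleton.elim j 0, mul_comm]
  have hrow : ∀ (x : Matrix (Fin 1) (Fin m) ℂ) (z : ℂ),
      (Matrix.of fun _ _ => z : Matrix (Fin 1) (Fin 1) ℂ) * x = z • x := by
    intro x z; ext i j; simp [Matrix.mul_apply, Subsingleton.elim i 0]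
  have hone : ∀ z w : ℂ, (Matrix.of fun _ _ => z : Matrix (Fin 1) (Fin 1) ℂ) *
      (Matrix.of fun _ _ => w) = Matrix.of fun _ _ => z * w := by
    intro z w; ext i j; simp [Matrix.mul_apply]
  have htr : ∀ z : ℂ, (Matrix.of fun _ _ => z : Matrix (Fin 1) (Fin 1) ℂ)ᵀ =
      Matrix.of fun _ _ => z := fun z => rfl
  refine ⟨r ^ 2, d, (r : ℂ)⁻¹ • U, (r : ℂ)⁻¹ • c, by positivity, hd, ?_, ?_⟩
  · simp [Matrix.conjTranspose_smul, hU, smul_smul]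
    field_simp
    simp
  · rw [Matrix.fromBlocks_transpose, Matrix.fromBlocks_multiply, Matrix.fromBlocks_multiply,
      Matrix.fromBlocks_smul, Matrix.fromBlocks_inj]
    simp only [Matrix.transpose_smul, Matrix.transpose_mul, Matrix.transpose_add, hcol, hrow, hone,
      htr, Matrix.transpose_zero, Matrix.zero_mul, Matrix.mul_zero, zero_add,
      Matrix.smul_mul, Matrix.mul_smul, Matrix.add_mul, smul_add, smul_smul,
      Complex.ofReal_pow, Matrix.mul_assoc]
    refine ⟨?_, ?_, ?_, ?_⟩
    · ext i j
      simp only [Matrix.add_apply, Matrix.smul_apply, smul_eq_mul]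
      field_simp
      ring
    · ext i j
      simp only [Matrix.add_apply, Matrix.smul_apply, smul_eq_mul]
      field_simp
    · ext i j
      simp only [Matrix.add_apply, Matrix.smul_apply, smul_eq_mul]
      field_simp
    · ext i j
      simp only [Matrix.smul_apply, Matrix.of_apply, smul_eq_mul]
      ring

/-- Theorem 5.8, existence part.  For `n = m + 1 > 2` every symmetric
`n × n` matrix `H` can be taken by an admissible transformation to one of the normal forms
(i), (ii), (iii). -/
theorem exists_admissible_to_normal_form (m : ℕ) (hm : 2 ≤ m)
    (H : Matrix (Fin m ⊕ Fin 1) (Fin m ⊕ Fin 1) ℂ) (hH : Hᵀ = H) :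
    ∃ K, IsAdmissibleImage m H K ∧ IsNormalForm m hm K := by
  obtain ⟨k, rfl⟩ : ∃ k, m = k + 1 := ⟨m - 1, by omega⟩
  obtain ⟨A, b, e, hA, rfl⟩ : ∃ (A : Matrix (Fin (k + 1)) (Fin (k + 1)) ℂ)
      (b : Matrix (Fin (k + 1)) (Fin 1) ℂ) (e : ℂ), Aᵀ = A ∧
      H = fromBlocks A b bᵀ (Matrix.of fun _ _ => e) := by
    refine ⟨H.toBlocks₁₁, H.toBlocks₁₂, H (Sum.inr 0) (Sum.inr 0), ?_, ?_⟩
    · ext i j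
      exact congrFun (congrFun hH _) _
    · ext (i | i) (j | j)
      · rfl
      · rfl
      · exact congrFun (congrFun hH _) _
      · simp [Subsingleton.elim i 0, Subsingleton.elim j 0]
  have hnorm : ∀ (r : ℝ) (s : Fin (k + 1) → ℝ), 0 < r → (∀ i, 0 ≤ s i) → Antitone s →
      (r * s 0 = 1 ∨ ∀ i, s i = 0) →
      (((fun i => r * s i) (⟨0, by omega⟩ : Fin (k + 1)) = 1 ∧
        (∀ i j : Fin (k + 1), i ≤ j → (fun i => r * s i) j ≤ (fun i => r * s i) i) ∧
        (∀ i, 0 ≤ (fun i => r * s i) i)) ∨ (∀ i, (fun i => r * s i) i = 0)) := by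
    intro r s hr hs hanti h
    refine h.imp (fun h => ⟨h, ?_, ?_⟩) (fun h i => by simp [h])
    · exact fun i j hij => mul_le_mul_of_nonneg_left (hanti hij) hr.le
    · exact fun i => mul_nonneg hr.le (hs i)
  by_cases he : e = 0
  · subst he
    by_cases hb : b = 0
    -- Form (ii): only `A` is present, so its Takagi factorization suffices.
    · subst hb
      obtain ⟨U, s, hU, hs, hanti, hUA⟩ := takagi _ A hA
      obtain ⟨r, hr, hrs⟩ := exists_normalizing_scale s hs hanti
      have hr' : (r : ℂ) ≠ 0 := by exact_mod_cast hr.ne'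
      refine ⟨_, isAdmissibleImage_of_unitary A U 0 0 0 r 1 one_pos hr' hU, Or.inr (Or.inl
        ⟨fun i => r * s i, hnorm r s hr hs hanti hrs, ?_⟩)⟩
      rw [hUA, Matrix.fromBlocks_inj]
      refine ⟨?_, by simp, by simp, by ext; simp⟩
      ext i j
      simp [Matrix.diagonal_apply]
    -- Form (i): the free column `c` of the transformation clears the last row and column.
    · have hb' : b.col 0 ≠ 0 := by
        intro h
        apply hb
        ext i j
        rw [Subsingleton.elim j 0]
        exact congrFun h i
      obtain ⟨U, c, s, N, hU, hN, hs, hanti, hlast, hUb, hUA⟩ :=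
        exists_unitary_corner k A hA _ hb'
      obtain ⟨r, hr, hrs⟩ := exists_normalizing_scale s hs hanti
      have hr' : (r : ℂ) ≠ 0 := by exact_mod_cast hr.ne'
      have hN' : (N : ℂ) ≠ 0 := by exact_mod_cast hN.ne'
      have hUb' : ∀ i j, (U * b) i j = if i = Fin.last k then (N : ℂ) else 0 := by
        intro i j
        have h : (U * b) i j = (U *ᵥ b.col 0) i := by
          rw [Subsingleton.elim j 0]; rfl
        rw [h, hUb]
        simp [Pi.single_apply]
      have hlc : ∀ i j, lastCol (k + 1) i j = if i = Fin.last k then 1 else 0 := by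
        intro i j
        simp [lastCol, Fin.ext_iff]
      refine ⟨_, isAdmissibleImage_of_unitary A U b (Matrix.of fun i _ => c i / N) 0 r
        (r ^ 2 * N)⁻¹ (by positivity) hr' hU, Or.inl ⟨fun i => r * s i, ?_, ?_⟩⟩
      · refine (hnorm r s hr hs hanti hrs).imp_left fun h => ⟨h.1, h.2.1, h.2.2, ?_⟩
        have : (⟨k + 1 - 1, by omega⟩ : Fin (k + 1)) = Fin.last k := rfl
        simp only [this, hlast, mul_zero]
      · have hcol : ((((r ^ 2 * N)⁻¹ : ℝ) : ℂ) * (starRingEnd ℂ) (r : ℂ) * r) •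
            (U * b + (0 : ℂ) • (Matrix.of fun i _ => c i / (N : ℂ))) = lastCol (k + 1) := by
          ext i j
          rw [hlc]
          simp only [zero_smul, add_zero, Matrix.smul_apply, hUb', Complex.conj_ofReal]
          split_ifs
          · push_cast
            simp only [smul_eq_mul]
            field_simp
          · simp
        rw [hcol, Matrix.fromBlocks_inj]
        refine ⟨?_, rfl, rfl, by ext; simp⟩
        ext i j
        have h := congrFun (congrFun hUA i) j
        simp only [Matrix.add_apply, vecMulVec_apply, Pi.single_apply] at h
        simp only [Matrix.smul_apply, Matrix.add_apply, Matrix.mul_apply (M := Matrix.of _),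
          Matrix.mul_apply (M := U * b), Matrix.transpose_apply, hUb', zero_smul,
          Complex.conj_ofReal, Finset.univ_unique, Finset.sum_singleton, Matrix.of_apply,
          smul_eq_mul, add_zero]
        have h' : (diagonal fun i => ((r * s i : ℝ) : ℂ)) i j =
            r * (diagonal fun i => (s i : ℂ)) i j := by
          simp [Matrix.diagonal_apply]
        rw [h', ← h]
        congr 2
        · congr 1
          split_ifs <;> simp [hN']
        · split_ifs <;> simp
          field_simp
  -- Form (iii): the column `c` is chosen to clear the off-diagonal blocks.
  · have hn : 0 < ‖e‖ := norm_pos_iff.2 he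
    have hn' : (‖e‖ : ℂ) ≠ 0 := by exact_mod_cast hn.ne'
    have hee : (starRingEnd ℂ) e * e = (‖e‖ : ℂ) ^ 2 := by
      rw [mul_comm, Complex.mul_conj']
    -- The Schur complement of `e`, multiplied by the phase of `e`, which is that of `conj d` for the
    -- `d` below making the corner entry positive.
    let A' : Matrix (Fin (k + 1)) (Fin (k + 1)) ℂ := (e / ‖e‖) • (A - e⁻¹ • (b * bᵀ))
    have hA' : A'ᵀ = A' := by
      simp [A', hA, Matrix.transpose_mul]
    obtain ⟨U, s, hU, hs, hanti, hUA⟩ := takagi _ A' hA'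
    obtain ⟨r, hr, hrs⟩ := exists_normalizing_scale s hs hanti
    have hr' : (r : ℂ) ≠ 0 := by exact_mod_cast hr.ne'
    have hce : (starRingEnd ℂ) e ≠ 0 := by simpa using he
    -- With `‖d‖ = r`, this `q` makes the corner entry `q ^ 2 * r ^ 3 * ‖e‖` equal to `1`.
    let q : ℝ := (√(r ^ 3 * ‖e‖))⁻¹
    have hq : 0 < q := by positivity
    have hqq : q ^ 2 * (r ^ 3 * ‖e‖) = 1 := by
      simp only [q, inv_pow]
      rw [Real.sq_sqrt (by positivity)]
      exact inv_mul_cancel₀ (by positivity)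
    have hqq' : (q : ℂ) ^ 2 * ((r : ℂ) ^ 3 * ‖e‖) = 1 := by exact_mod_cast hqq
    refine ⟨_, isAdmissibleImage_of_unitary A U b (-e⁻¹ • (U * b)) e
      (r * (starRingEnd ℂ) e / ‖e‖) q hq (by simp [he, hr']) hU, Or.inr (Or.inr
        ⟨fun i => r * s i, hnorm r s hr hs hanti hrs, ?_⟩)⟩
    have h0 : U * b + e • (-e⁻¹ • (U * b)) = 0 := by
      rw [smul_smul, mul_neg, mul_inv_cancel₀ he]
      simp
    rw [h0, Matrix.fromBlocks_inj]
    refine ⟨?_, by simp, by simp, ?_⟩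
    · have h' : (diagonal fun i => ((r * s i : ℝ) : ℂ)) =
          (r : ℂ) • (diagonal fun i => (s i : ℂ)) := by
        ext i j
        simp [Matrix.diagonal_apply]
      rw [h', ← hUA]
      have h1 : U * A' * Uᵀ = (e / ‖e‖) • (U * A * Uᵀ - e⁻¹ • (U * b * (U * b)ᵀ)) := by
        simp [A', Matrix.mul_sub, Matrix.sub_mul, Matrix.transpose_mul, Matrix.mul_assoc]
      rw [h1]
      ext i j
      simp
      field_simp
      ring
    · ext i j
      rw [Matrix.one_apply, if_pos (Subsingleton.elim i j)]
      simp only [Matrix.of_apply, map_div₀, map_mul, Complex.conj_ofReal, Complex.conj_conj]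
      field_simp
      linear_combination hqq' * ‖e‖ ^ 3 + hee * (q : ℂ) ^ 2 * (r : ℂ) ^ 3 *
        ((starRingEnd ℂ) e * e + (‖e‖ : ℂ) ^ 2)
end

section
/- Let n > 2 and suppose H₁ and H₂ are both matrices among the following list of normal forms: (i) fromBlocks(D_{n−1}(λ), e, eᵀ, 0), where e ∈ ℂ^{n−1} is the last standard basis column vector and either λ₁ = 1, 1 ≥ λ₂ ≥ … ≥ λ_{n−2} ≥ 0 and λ_{n−1} = 0, or λ = 0; (ii) fromBlocks(D_{n−1}(λ), 0, 0, 0), where either λ₁ = 1 ≥ λ₂ ≥ … ≥ λ_{n−1} ≥ 0 or λ = 0; (iii) fromBlocks(D_{n−1}(λ), 0, 0, 1), where either λ₁ = 1 ≥ λ₂ ≥ … ≥ λ_{n−1} ≥ 0 or λ = 0. If some admissible transformation maps H₁ to H₂, then H₁ = H₂. (Thus a symmetric matrix can be brought to precisely one of the normal forms.) -/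
/-!
Write an admissible transformation in blocks: with `s = a * conj d`, it sends
`fromBlocks D p pᵀ q` to the matrix with corner `s d² q`, column `s d (V p + q c)`, and
upper-left block `s (V D Vᵀ + c pᵀ Vᵀ + V p cᵀ + q c cᵀ)`. Since `V` is invertible and `s d ≠ 0`,
the corner and the column tell the three families of normal forms apart.

Within each family the upper-left blocks satisfy `D₂ = s V D₁ Vᵀ`. For (ii) this is immediate, and
for (iii) the column equation forces `c = 0`. For (i) the column equation says that the last basis
vector is an eigenvector of `V`; as `V` is a multiple of a unitary matrix, it is block diagonal, so
the terms involving `c` live in the last row and column, where both `D₂` and `V D₁ Vᵀ` vanish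
(`upperLeft_eq_of_lastCol`).

Finally `D₂ D₂ᴴ = r V D₁² V⁻¹` with `r > 0`, so comparing characteristic polynomials, `λ₂²` and
`r λ₁²` agree as multisets, hence as functions because both are antitone. The normalization `λ 0 = 1`
or `λ = 0` then gives `r = 1`, or both vanish (`eq_of_congruence`).
-/

open Matrix

/-- Nonincreasing nonnegative diagonals, scaled so that the largest entry is `1` or all vanish. -/
def IsNormalizedDiag {m : ℕ} (z : Fin m) (lam : Fin m → ℝ) : Prop :=
  Antitone lam ∧ (∀ i, 0 ≤ lam i) ∧ (lam z = 1 ∨ lam = 0)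

lemma isNormalizedDiag_of_or {m : ℕ} {z : Fin m} {lam : Fin m → ℝ}
    (h : (lam z = 1 ∧ (∀ i j : Fin m, i ≤ j → lam j ≤ lam i) ∧ (∀ i, 0 ≤ lam i)) ∨
      (∀ i, lam i = 0)) : IsNormalizedDiag z lam := by
  rcases h with ⟨h0, h1, h2⟩ | h
  · exact ⟨fun i j hij => h1 i j hij, h2, Or.inl h0⟩
  · obtain rfl : lam = 0 := funext h
    exact ⟨fun _ _ _ => le_rfl, fun _ => le_rfl, Or.inr rfl⟩

lemma antitone_eq_of_multiset_eq {m : ℕ} {f g : Fin m → ℝ} (hf : Antitone f) (hg : Antitone g)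
    (h : Finset.univ.val.map f = Finset.univ.val.map g) : f = g := by
  have hp : (List.ofFn f).Perm (List.ofFn g) := by
    rw [← Multiset.coe_eq_coe]
    simpa [Fin.univ_val_map] using h
  exact List.ofFn_injective (hp.eq_of_pairwise' hf.sortedGE_ofFn.pairwise hg.sortedGE_ofFn.pairwise)

/-- Similar real diagonal matrices, viewed over `ℂ`, have the same entries up to order. -/
lemma antitone_eq_of_similar {m : ℕ} {f g : Fin m → ℝ} (hf : Antitone f) (hg : Antitone g)
    {P Q : Matrix (Fin m) (Fin m) ℂ} (hQP : Q * P = 1)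
    (h : Matrix.diagonal (fun i => (f i : ℂ)) =
      P * Matrix.diagonal (fun i => (g i : ℂ)) * Q) : f = g := by
  have hc : (Matrix.diagonal (fun i => (f i : ℂ))).charpoly =
      (Matrix.diagonal (fun i => (g i : ℂ))).charpoly := by
    rw [h, Matrix.mul_assoc, Matrix.charpoly_mul_comm, Matrix.mul_assoc, hQP, Matrix.mul_one]
  have hr := congrArg Polynomial.roots hc
  have hroots : ∀ u : Fin m → ℂ,
      (Matrix.diagonal u).charpoly.roots = Finset.univ.val.map u := by
    intro u
    rw [Matrix.charpoly_diagonal]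
    simpa [Multiset.map_map, Finset.prod, Function.comp_def] using
      Polynomial.roots_multiset_prod_X_sub_C (Finset.univ.val.map u)
  rw [hroots, hroots] at hr
  apply antitone_eq_of_multiset_eq hf hg
  apply Multiset.map_injective Complex.ofReal_injective
  simpa [Multiset.map_map, Function.comp_def] using hr

lemma eq_of_congruence {m : ℕ} {z : Fin m} {l₁ l₂ : Fin m → ℝ}
    (h₁ : IsNormalizedDiag z l₁) (h₂ : IsNormalizedDiag z l₂)
    {a : ℝ} {s : ℂ} {V : Matrix (Fin m) (Fin m) ℂ} (ha : 0 < a) (hs : s ≠ 0)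
    (hV : (a : ℂ) • (V * Vᴴ) = 1)
    (h : Matrix.diagonal (fun i => (l₂ i : ℂ)) =
      s • (V * Matrix.diagonal (fun i => (l₁ i : ℂ)) * Vᵀ)) : l₁ = l₂ := by
  have ha' : (a : ℂ) ≠ 0 := by exact_mod_cast ha.ne'
  have hV' : ((a : ℂ) • Vᴴ) * V = 1 := by
    rw [mul_eq_one_comm, Matrix.mul_smul, hV]
  obtain ⟨r, hr⟩ : ∃ r : ℝ, r = Complex.normSq s / a ^ 2 := ⟨_, rfl⟩
  have hr0 : 0 < r := by
    rw [hr]; exact div_pos (Complex.normSq_pos.2 hs) (by positivity)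
  -- The transpose of `a • (Vᴴ * V) = 1`, which cancels the inner factors of `D₂ * D₂ᴴ`.
  have hVt : Vᵀ * (Vᴴ)ᵀ = (a : ℂ)⁻¹ • (1 : Matrix (Fin m) (Fin m) ℂ) := by
    have := congrArg Matrix.transpose hV'
    rw [Matrix.transpose_mul, Matrix.transpose_smul, Matrix.mul_smul, Matrix.transpose_one] at this
    rw [← this, smul_smul, inv_mul_cancel₀ ha', one_smul]
  have hD : ∀ l : Fin m → ℝ, (Matrix.diagonal (fun i => (l i : ℂ)))ᴴ =
      Matrix.diagonal (fun i => (l i : ℂ)) := by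
    intro l
    rw [Matrix.diagonal_conjTranspose]
    congr 1
    ext i
    simp
  have hsq : Matrix.diagonal (fun i => ((l₂ i ^ 2 : ℝ) : ℂ)) =
      V * Matrix.diagonal (fun i => ((r * l₁ i ^ 2 : ℝ) : ℂ)) * ((a : ℂ) • Vᴴ) := by
    have e2 : Matrix.diagonal (fun i => ((l₂ i ^ 2 : ℝ) : ℂ)) =
        Matrix.diagonal (fun i => (l₂ i : ℂ)) * (Matrix.diagonal (fun i => (l₂ i : ℂ)))ᴴ := by
      rw [hD, Matrix.diagonal_mul_diagonal]
      congr 1; ext i; push_cast; ring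
    have e1 : Matrix.diagonal (fun i => ((r * l₁ i ^ 2 : ℝ) : ℂ)) =
        (r : ℂ) • (Matrix.diagonal (fun i => (l₁ i : ℂ)) *
          Matrix.diagonal (fun i => (l₁ i : ℂ))) := by
      rw [Matrix.diagonal_mul_diagonal, ← Matrix.diagonal_smul]
      congr 1; ext i; simp [sq]
    have e3 : (Vᵀ)ᴴ = (Vᴴ)ᵀ := rfl
    rw [e2, e1, h, Matrix.conjTranspose_smul, Matrix.conjTranspose_mul, Matrix.conjTranspose_mul,
      hD, e3]
    have e4 : V * Matrix.diagonal (fun i => (l₁ i : ℂ)) * Vᵀ *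
        ((Vᴴ)ᵀ * (Matrix.diagonal (fun i => (l₁ i : ℂ)) * Vᴴ)) =
        (a : ℂ)⁻¹ • (V * (Matrix.diagonal (fun i => (l₁ i : ℂ)) *
          Matrix.diagonal (fun i => (l₁ i : ℂ))) * Vᴴ) := by
      rw [Matrix.mul_assoc _ Vᵀ, ← Matrix.mul_assoc Vᵀ, hVt]
      simp only [Matrix.mul_assoc, Matrix.smul_mul, Matrix.mul_smul, Matrix.one_mul]
    rw [Matrix.smul_mul, Matrix.mul_smul, e4, Matrix.mul_smul, Matrix.mul_smul, Matrix.smul_mul,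
      smul_smul, smul_smul, smul_smul]
    congr 1
    rw [hr]
    have : s * star s = (Complex.normSq s : ℂ) := Complex.mul_conj s
    rw [this]
    push_cast
    field_simp
  have key : (fun i => l₂ i ^ 2) = fun i => r * l₁ i ^ 2 := by
    refine antitone_eq_of_similar ?_ ?_ hV' hsq
    · intro i j hij
      exact pow_le_pow_left₀ (h₂.2.1 j) (h₂.1 hij) 2
    · intro i j hij
      exact mul_le_mul_of_nonneg_left (pow_le_pow_left₀ (h₁.2.1 j) (h₁.1 hij) 2) hr0.le
  have key' : ∀ i, l₂ i ^ 2 = r * l₁ i ^ 2 := fun i => congrFun key i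
  rcases h₁.2.2 with h1 | h1
  · rcases h₂.2.2 with h2 | h2
    · have hr1 := key' z
      rw [h1, h2] at hr1
      ext i
      have := key' i
      have hr1 : r = 1 := by linarith
      rw [hr1, one_mul] at this
      exact ((pow_left_inj₀ (h₂.2.1 i) (h₁.2.1 i) two_ne_zero).1 this).symm
    · have := key' z
      rw [h1, h2] at this
      simp at this
      exact absurd this.symm hr0.ne'
  · ext i
    have := key' i
    rw [h1] at this ⊢
    simp at this
    simp [this]

lemma lastCol_apply {m : ℕ} {l : Fin m} (hl : (l : ℕ) = m - 1) (i : Fin m) (j : Fin 1) :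
    lastCol m i j = if i = l then 1 else 0 := by
  simp [lastCol, Fin.ext_iff, hl]

lemma lastCol_ne_zero {m : ℕ} {l : Fin m} (hl : (l : ℕ) = m - 1) : lastCol m ≠ 0 := by
  intro h
  have := congrFun (congrFun h l) 0
  simp [lastCol_apply hl] at this

/-- If the last basis vector is an eigenvector of `V`, the terms involving `c` do not contribute to
the upper-left block. -/
lemma upperLeft_eq_of_lastCol {m : ℕ} {l : Fin m} (hl : (l : ℕ) = m - 1) {l₁ l₂ : Fin m → ℝ}
    (h1 : l₁ l = 0) (h2 : l₂ l = 0) {a : ℝ} {s t : ℂ} {V : Matrix (Fin m) (Fin m) ℂ}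
    {c : Matrix (Fin m) (Fin 1) ℂ} (hV : (a : ℂ) • (V * Vᴴ) = 1)
    (hcol : lastCol m = t • (V * lastCol m))
    (h : Matrix.diagonal (fun i => (l₂ i : ℂ)) =
      s • ((V * Matrix.diagonal (fun i => (l₁ i : ℂ)) + c * (lastCol m)ᵀ) * Vᵀ +
        V * lastCol m * cᵀ)) :
    Matrix.diagonal (fun i => (l₂ i : ℂ)) =
      s • (V * Matrix.diagonal (fun i => (l₁ i : ℂ)) * Vᵀ) := by
  have hVe : ∀ i j, (V * lastCol m) i j = V i l := by
    intro i j
    simp [Matrix.mul_apply, lastCol_apply hl]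
  have hc : ∀ i, (if i = l then 1 else 0) = t * V i l := by
    intro i
    have := congrFun (congrFun hcol i) 0
    rwa [Matrix.smul_apply, hVe, lastCol_apply hl, smul_eq_mul] at this
  have htV : t * V l l = 1 := by simpa using (hc l).symm
  have ht : t ≠ 0 := left_ne_zero_of_mul_eq_one htV
  have hcl : ∀ i, i ≠ l → V i l = 0 := by
    intro i hi
    have := hc i
    rw [if_neg hi] at this
    exact (mul_eq_zero.1 this.symm).resolve_left ht
  have hV' : ((a : ℂ) • Vᴴ) * V = 1 := by
    rw [mul_eq_one_comm, Matrix.mul_smul, hV]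
  -- Column `l` of `V` is a multiple of a basis vector; orthogonality of columns clears row `l`.
  have hrow : ∀ j, j ≠ l → V l j = 0 := by
    intro j hj
    have hrl : ∀ j, (a : ℂ) * (star (V l l) * V l j) = (1 : Matrix (Fin m) (Fin m) ℂ) l j := by
      intro j
      rw [← hV', Matrix.mul_apply, Finset.sum_eq_single l]
      · simp [mul_assoc]
      · intro k _ hk
        simp [hcl k hk]
      · simp
    have hll := hrl l
    rw [Matrix.one_apply_eq, ← mul_assoc] at hll
    have hlj := hrl j
    rw [Matrix.one_apply_ne hj.symm, ← mul_assoc] at hlj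
    exact (mul_eq_zero.1 hlj).resolve_left (left_ne_zero_of_mul_eq_one hll)
  have hent : ∀ i j, (V * Matrix.diagonal (fun i => (l₁ i : ℂ)) * Vᵀ) i j =
      ∑ k, V i k * l₁ k * V j k := by
    intro i j
    rw [Matrix.mul_apply]
    simp only [Matrix.mul_diagonal, Matrix.transpose_apply]
  have hterm : ∀ k, V l k * (l₁ k : ℂ) = 0 := by
    intro k
    by_cases hk : k = l
    · simp [hk, h1]
    · simp [hrow k hk]
  have hc2 : c * (lastCol m)ᵀ * Vᵀ = c * (V * lastCol m)ᵀ := by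
    rw [Matrix.transpose_mul, Matrix.mul_assoc]
  ext i j
  by_cases hi : i = l
  · subst hi
    have : Matrix.diagonal (fun i => (l₂ i : ℂ)) i j = 0 := by
      rw [Matrix.diagonal_apply]; simp [h2]
    rw [this, Matrix.smul_apply, hent]
    simp [hterm]
  · by_cases hj : j = l
    · subst hj
      have : Matrix.diagonal (fun i => (l₂ i : ℂ)) i j = 0 := by
        rw [Matrix.diagonal_apply]; simp [hi]
      rw [this, Matrix.smul_apply, hent]
      have : ∀ k, V i k * (l₁ k : ℂ) * V j k = 0 := by
        intro k
        rw [mul_assoc, mul_comm (l₁ k : ℂ), hterm, mul_zero]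
      simp [this]
    · rw [h, Matrix.add_mul, hc2]
      have e1 : (c * (V * lastCol m)ᵀ) i j = 0 := by
        rw [Matrix.mul_apply]; simp [Matrix.transpose_apply, hVe, hcl j hj]
      have e2 : (V * lastCol m * cᵀ) i j = 0 := by
        rw [Matrix.mul_apply]; simp [hVe, hcl i hi]
      simp only [Matrix.smul_apply, Matrix.add_apply, e1, e2, add_zero]

/-- The block equations of an admissible transformation. -/
lemma block_equations {m : ℕ} {s d : ℂ} {V D₁ D₂ : Matrix (Fin m) (Fin m) ℂ}
    {c p₁ p₂ : Matrix (Fin m) (Fin 1) ℂ} {g₁ g₂ : Matrix (Fin 1) (Fin m) ℂ}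
    {q₁ q₂ : Matrix (Fin 1) (Fin 1) ℂ}
    (h : Matrix.fromBlocks D₂ p₂ g₂ q₂ =
      s • (Matrix.fromBlocks V c 0 (Matrix.of fun _ _ => d) * Matrix.fromBlocks D₁ p₁ g₁ q₁ *
        (Matrix.fromBlocks V c 0 (Matrix.of fun _ _ => d))ᵀ)) :
    D₂ = s • ((V * D₁ + c * g₁) * Vᵀ + (V * p₁ + c * q₁) * cᵀ) ∧
      p₂ = (s * d) • (V * p₁ + c * q₁) ∧ q₂ = (s * d * d) • q₁ := by
  have hd : (Matrix.of fun _ _ => d : Matrix (Fin 1) (Fin 1) ℂ) = d • 1 := by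
    ext i j
    simp [Subsingleton.elim i j]
  rw [hd, Matrix.fromBlocks_transpose, Matrix.fromBlocks_multiply, Matrix.fromBlocks_multiply,
    Matrix.fromBlocks_smul, Matrix.fromBlocks_inj] at h
  obtain ⟨hA, hB, -, hD⟩ := h
  refine ⟨hA, ?_, ?_⟩
  · rw [hB]; simp [smul_smul]
  · rw [hD]; simp [smul_smul, mul_assoc]

/-- Theorem 5.8, uniqueness part.  If `H₁`, `H₂` are both among the
normal forms (i), (ii), (iii) and some admissible transformation maps `H₁` to `H₂`, then
`H₁ = H₂`: a symmetric matrix can be brought to precisely one of the normal forms. -/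
theorem normal_form_unique (m : ℕ) (hm : 2 ≤ m)
    (H₁ H₂ : Matrix (Fin m ⊕ Fin 1) (Fin m ⊕ Fin 1) ℂ)
    (h₁ : IsNormalForm m hm H₁) (h₂ : IsNormalForm m hm H₂)
    (h : IsAdmissibleImage m H₁ H₂) :
    H₁ = H₂ := by
  obtain ⟨a, d, V, c, ha, hd, hV, h⟩ := h
  obtain ⟨s, hs⟩ : ∃ s : ℂ, s = (a : ℂ) * (starRingEnd ℂ) d := ⟨_, rfl⟩
  rw [← hs] at h
  have ha' : (a : ℂ) ≠ 0 := by exact_mod_cast ha.ne'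
  have hs0 : s ≠ 0 := by
    rw [hs]; exact mul_ne_zero ha' ((map_ne_zero _).2 hd)
  have hV' : ((a : ℂ) • Vᴴ) * V = 1 := by
    rw [mul_eq_one_comm, Matrix.mul_smul, hV]
  have hsd : s * d ≠ 0 := mul_ne_zero hs0 hd
  have hsdd : s * d * d ≠ 0 := mul_ne_zero hsd hd
  have hl : ((⟨m - 1, by omega⟩ : Fin m) : ℕ) = m - 1 := rfl
  have hlast : lastCol m ≠ 0 := lastCol_ne_zero hl
  have hone : (1 : Matrix (Fin 1) (Fin 1) ℂ) ≠ 0 := one_ne_zero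
  rcases h₁ with ⟨l₁, n₁, rfl⟩ | ⟨l₁, n₁, rfl⟩ | ⟨l₁, n₁, rfl⟩ <;>
  rcases h₂ with ⟨l₂, n₂, rfl⟩ | ⟨l₂, n₂, rfl⟩ | ⟨l₂, n₂, rfl⟩ <;>
  obtain ⟨hA, hB, hC⟩ := block_equations h
  · rw [Matrix.mul_zero, add_zero] at hA hB
    have hz₁ : l₁ ⟨m - 1, by omega⟩ = 0 := n₁.elim (fun h => h.2.2.2) (fun h => h _)
    have hz₂ : l₂ ⟨m - 1, by omega⟩ = 0 := n₂.elim (fun h => h.2.2.2) (fun h => h _)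
    have N₁ := isNormalizedDiag_of_or (n₁.imp_left fun h => ⟨h.1, h.2.1, h.2.2.1⟩)
    have N₂ := isNormalizedDiag_of_or (n₂.imp_left fun h => ⟨h.1, h.2.1, h.2.2.1⟩)
    rw [eq_of_congruence N₁ N₂ ha hs0 hV (upperLeft_eq_of_lastCol hl hz₁ hz₂ hV hB hA)]
  · -- From (i) to (ii): an invertible `V` cannot kill the last basis vector.
    exfalso
    rw [Matrix.mul_zero, add_zero, eq_comm, smul_eq_zero] at hB
    have := hB.resolve_left hsd
    apply hlast
    rw [← Matrix.one_mul (lastCol m), ← hV', Matrix.mul_assoc, this, Matrix.mul_zero]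
  · simp at hC
  · exact absurd (by simpa using hB) hlast
  · rw [eq_of_congruence (isNormalizedDiag_of_or n₁) (isNormalizedDiag_of_or n₂) ha hs0 hV
      (by simpa using hA)]
  · simp at hC
  · exact absurd ((smul_eq_zero.1 hC.symm).resolve_left hsdd) hone
  · exact absurd ((smul_eq_zero.1 hC.symm).resolve_left hsdd) hone
  · rw [Matrix.mul_zero, zero_add, Matrix.mul_one, eq_comm, smul_eq_zero] at hB
    have hc0 : c = 0 := hB.resolve_left hsd
    rw [eq_of_congruence (isNormalizedDiag_of_or n₁) (isNormalizedDiag_of_or n₂) ha hs0 hV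
      (by simpa [hc0] using hA)]
end

section
/- Let n ≥ 2 and let r, s be nonnegative integers with r + s = n − 1. Let H ∈ M_n(ℂ) be symmetric and suppose its lower-right entry H_{nn} is nonzero. Then there exists an I_{r,s}-admissible transformation taking H to a matrix of the form fromBlocks(R, 0, 0, 1) for some symmetric R ∈ M_{n−1}(ℂ). -/
/-! With `h = H_{nn}`, take `d = conj h`, `V = |h|² • 1` and `a = |h|⁻⁴`. Then
`a V I_{r,s} Vᴴ = I_{r,s}`, and the lower-right entry of the image is
`a · conj d · d² · h = a |h|⁴ = 1`, so no root extraction is needed. The column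
`c = -h⁻¹ V H₁₂ = -conj h • H₁₂` kills the off-diagonal block; the image is symmetric because
`H` is, so it has the required form with `R` its upper-left block. -/

open Matrix

/-- The matrix `I_{r,s}`: diagonal with `r` entries `+1` followed by `s` entries `-1`. -/
def Irs (r s : ℕ) : Matrix (Fin (r + s)) (Fin (r + s)) ℂ :=
  Matrix.diagonal fun i => if (i : ℕ) < r then 1 else -1

/-- An `I_{r,s}`-admissible transformation `H ↦ (a·conj d) • (B * H * Bᵀ)`, where
`B = fromBlocks V c 0 d` with `d ≠ 0`, `a` a nonzero real and `a • (V * I_{r,s} * Vᴴ) = I_{r,s}`.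
`IsIrsAdmissibleImage r s H K` says that `K` is the image of `H` under such a transformation. -/
def IsIrsAdmissibleImage (r s : ℕ)
    (H K : Matrix (Fin (r + s) ⊕ Fin 1) (Fin (r + s) ⊕ Fin 1) ℂ) : Prop :=
  ∃ (a : ℝ) (d : ℂ) (V : Matrix (Fin (r + s)) (Fin (r + s)) ℂ)
      (c : Matrix (Fin (r + s)) (Fin 1) ℂ),
    a ≠ 0 ∧ d ≠ 0 ∧ (a : ℂ) • (V * Irs r s * Vᴴ) = Irs r s ∧
    K = ((a : ℂ) * (starRingEnd ℂ) d) •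
      (Matrix.fromBlocks V c 0 (Matrix.of fun _ _ => d) * H *
        (Matrix.fromBlocks V c 0 (Matrix.of fun _ _ => d))ᵀ)

/-- If `H` is a symmetric `n × n` matrix (`n = r + s + 1 ≥ 2`) whose
lower-right entry is nonzero, then some `I_{r,s}`-admissible transformation takes `H` to
`fromBlocks R 0 0 1` for a symmetric `R`. -/
theorem irs_admissible_to_block_form (r s : ℕ) (hrs : 1 ≤ r + s)
    (H : Matrix (Fin (r + s) ⊕ Fin 1) (Fin (r + s) ⊕ Fin 1) ℂ) (hH : Hᵀ = H)
    (hnn : H (Sum.inr 0) (Sum.inr 0) ≠ 0) :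
    ∃ R : Matrix (Fin (r + s)) (Fin (r + s)) ℂ, Rᵀ = R ∧
      IsIrsAdmissibleImage r s H (Matrix.fromBlocks R 0 0 1) := by
  obtain ⟨h, hh⟩ : ∃ h, h = H (Sum.inr 0) (Sum.inr 0) := ⟨_, rfl⟩
  rw [← hh] at hnn
  have hc : (starRingEnd ℂ) h ≠ 0 := by simpa using hnn
  have hN : Complex.normSq h ≠ 0 := by simpa using hnn
  have hNc : (Complex.normSq h : ℂ) = h * (starRingEnd ℂ) h := (Complex.mul_conj h).symm
  set V : Matrix (Fin (r + s)) (Fin (r + s)) ℂ := (Complex.normSq h : ℂ) • 1 with hV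
  set c : Matrix (Fin (r + s)) (Fin 1) ℂ :=
    Matrix.of fun i _ => -(starRingEnd ℂ) h * H (Sum.inl i) (Sum.inr 0) with hcdef
  set a : ℝ := (Complex.normSq h ^ 2)⁻¹ with ha
  set B : Matrix (Fin (r + s) ⊕ Fin 1) (Fin (r + s) ⊕ Fin 1) ℂ :=
    Matrix.fromBlocks V c 0 (Matrix.of fun _ _ => (starRingEnd ℂ) h) with hB
  set K := ((a : ℂ) * (starRingEnd ℂ) ((starRingEnd ℂ) h)) • (B * H * Bᵀ) with hK
  have hKs : Kᵀ = K := by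
    simp [hK, Matrix.transpose_mul, hH, Matrix.mul_assoc]
  -- The off-diagonal block is a multiple of `V H₁₂ + c h`, which vanishes by the choice of `c`.
  have h12 : ∀ i, K (Sum.inl i) (Sum.inr 0) = 0 := by
    intro i
    simp [hK, hB, hV, hcdef, Matrix.mul_apply, Matrix.one_apply, ← hh, hNc]
    right; left; ring
  have h22 : K (Sum.inr 0) (Sum.inr 0) = 1 := by
    simp [hK, hB, ha, Matrix.mul_apply, ← hh, hNc]
    field_simp
  refine ⟨K.toBlocks₁₁, ?_, a, (starRingEnd ℂ) h, V, c, ?_, hc, ?_, ?_⟩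
  · ext i j
    exact congrFun (congrFun hKs (Sum.inl i)) (Sum.inl j)
  · exact inv_ne_zero (pow_ne_zero 2 hN)
  · have hNC : (Complex.normSq h : ℂ) ≠ 0 := by exact_mod_cast hN
    simp only [hV, ha, Matrix.conjTranspose_smul, Matrix.conjTranspose_one, Matrix.smul_mul,
      Matrix.mul_smul, one_mul, mul_one, smul_smul]
    convert one_smul ℂ (Irs r s) using 2
    simp
    field_simp
  · change _ = K
    ext (i | i) (j | j)
    · rfl
    · rw [Subsingleton.elim j 0, h12]; rfl
    · rw [Subsingleton.elim i 0, ← hKs, Matrix.transpose_apply, h12]; rfl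
    · rw [Subsingleton.elim i 0, Subsingleton.elim j 0, h22]; rfl
end

section
/- Let n ≥ 2 and let r, s be nonnegative integers with r + s = n − 1. Let R, R' ∈ M_{n−1}(ℂ) be symmetric. Then there exists an I_{r,s}-admissible transformation mapping fromBlocks(R, 0, 0, 1) to fromBlocks(R', 0, 0, 1) if and only if R' = τ·(Uᵀ R U) for some real τ > 0 and some U ∈ Û(r,s,ℂ). (That is, the matrices R obtainable are precisely the orbit of R under the action (σ,U) ↦ (√σ·U)ᵀ R (√σ·U) of ℝ₊ × Û(r,s,ℂ).) -/
/-!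
Multiplying out the blocks, an admissible transformation sends `fromBlocks R 0 0 1` to
`(a * conj d) • fromBlocks (V R Vᵀ + c cᵀ) (d c) (d cᵀ) (d ^ 2)`
(`admissible_block_mul`, `smul_fromBlocks_eq_iff`). Since `a` and `d` are nonzero, the target
`fromBlocks R' 0 0 1` forces `c = 0`, `a * conj d * d ^ 2 = 1` and
`R' = (a * conj d) • V R Vᵀ`. The scalar equation makes `d` a real number of the same sign as `a`.

The two descriptions then correspond through `U = √|a| • Vᵀ`, `τ = |d|`; conversely, with
`ε = ±1` the sign in `Uᴴ I_{r,s} U = ε I_{r,s}`, one takes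
`a = ε / τ ^ 3`, `d = ε τ`, `V = √(τ ^ 3) • Uᵀ`, `c = 0`. The condition on `V` matches the
condition on `U` by transposing it (`Irs_transpose_form`), because `I_{r,s}` is symmetric.
-/

open Matrix

lemma Irs_transpose (r s : ℕ) : (Irs r s)ᵀ = Irs r s := by
  simp [Irs]

lemma Irs_mul_self (r s : ℕ) : Irs r s * Irs r s = 1 := by
  rw [Irs, Matrix.diagonal_mul_diagonal, ← Matrix.diagonal_one]
  congr 1
  funext i
  split_ifs <;> simp

/-- The hermitian form in `V` and the one in `Vᵀ` are transposes of each other. -/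
lemma Irs_transpose_form (r s : ℕ) (V : Matrix (Fin (r + s)) (Fin (r + s)) ℂ) :
    Vᵀᴴ * Irs r s * Vᵀ = (V * Irs r s * Vᴴ)ᵀ := by
  rw [Matrix.transpose_mul, Matrix.transpose_mul, Irs_transpose, Matrix.mul_assoc]
  rfl

lemma isUnit_of_form {r s : ℕ} {U : Matrix (Fin (r + s)) (Fin (r + s)) ℂ}
    (h : Uᴴ * Irs r s * U = Irs r s ∨ Uᴴ * Irs r s * U = -(Irs r s)) : IsUnit U := by
  rcases h with h | h
  · refine (IsUnit.of_mul_eq_one_right (Irs r s * (Uᴴ * Irs r s)) ?_)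
    rw [Matrix.mul_assoc, h, Irs_mul_self]
  · refine (IsUnit.of_mul_eq_one_right (-(Irs r s) * (Uᴴ * Irs r s)) ?_)
    rw [Matrix.mul_assoc, h, neg_mul_neg, Irs_mul_self]

lemma admissible_block_mul {m : ℕ} (R V : Matrix (Fin m) (Fin m) ℂ)
    (c : Matrix (Fin m) (Fin 1) ℂ) (d : ℂ) :
    Matrix.fromBlocks V c 0 (Matrix.of fun _ _ => d) * Matrix.fromBlocks R 0 0 1 *
        (Matrix.fromBlocks V c 0 (Matrix.of fun _ _ => d))ᵀ =
      Matrix.fromBlocks (V * R * Vᵀ + c * cᵀ) (d • c) (d • cᵀ)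
        ((d ^ 2) • (1 : Matrix (Fin 1) (Fin 1) ℂ)) := by
  have hd : (Matrix.of fun _ _ => d : Matrix (Fin 1) (Fin 1) ℂ) = d • 1 := by
    ext i j
    simp [Subsingleton.elim i j]
  rw [hd, Matrix.fromBlocks_transpose, Matrix.fromBlocks_multiply, Matrix.fromBlocks_multiply]
  simp [smul_smul, pow_two]

lemma smul_fromBlocks_eq_iff {m : ℕ} (R' A : Matrix (Fin m) (Fin m) ℂ)
    (c : Matrix (Fin m) (Fin 1) ℂ) (k d : ℂ) (hk : k ≠ 0) (hd : d ≠ 0) :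
    Matrix.fromBlocks R' 0 0 1 = k • Matrix.fromBlocks (A + c * cᵀ) (d • c) (d • cᵀ)
        ((d ^ 2) • (1 : Matrix (Fin 1) (Fin 1) ℂ)) ↔
      c = 0 ∧ k * d ^ 2 = 1 ∧ R' = k • A := by
  rw [Matrix.fromBlocks_smul, Matrix.fromBlocks_inj]
  constructor
  · rintro ⟨h1, h2, -, h4⟩
    have hc : c = 0 := by simpa [hk, hd] using h2.symm
    refine ⟨hc, ?_, by simpa [hc] using h1⟩
    simpa using (congrFun (congrFun h4 0) 0).symm
  · rintro ⟨rfl, h, rfl⟩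
    simp [smul_smul, h]

/-- the orbit description of Proposition 1.1.3.  For symmetric `R`, `R'`,
some `I_{r,s}`-admissible transformation maps `fromBlocks R 0 0 1` to `fromBlocks R' 0 0 1`
iff `R' = τ • (Uᵀ * R * U)` for some real `τ > 0` and some `U ∈ Û(r,s,ℂ)`,
i.e. `U` invertible with `Uᴴ * I_{r,s} * U = ± I_{r,s}`. -/
theorem irs_admissible_iff_orbit (r s : ℕ) (hrs : 1 ≤ r + s)
    (R R' : Matrix (Fin (r + s)) (Fin (r + s)) ℂ) (hR : Rᵀ = R) (hR' : R'ᵀ = R') :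
    IsIrsAdmissibleImage r s (Matrix.fromBlocks R 0 0 1) (Matrix.fromBlocks R' 0 0 1)
      ↔ ∃ (τ : ℝ) (U : Matrix (Fin (r + s)) (Fin (r + s)) ℂ),
          0 < τ ∧ IsUnit U ∧
          (Uᴴ * Irs r s * U = Irs r s ∨ Uᴴ * Irs r s * U = -(Irs r s)) ∧
          R' = (τ : ℂ) • (Uᵀ * R * U) := by
  constructor
  · rintro ⟨a, d, V, c, ha, hd, hV, hK⟩
    have hk : (a : ℂ) * (starRingEnd ℂ) d ≠ 0 :=
      mul_ne_zero (by exact_mod_cast ha) (by simpa using hd)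
    rw [admissible_block_mul, smul_fromBlocks_eq_iff _ _ _ _ _ hk hd] at hK
    obtain ⟨-, h1, hR1⟩ := hK
    -- `a * ‖d‖² * d = 1` shows that `d` is real.
    have h2 : ((a * Complex.normSq d : ℝ) : ℂ) * d = 1 := by
      rw [Complex.ofReal_mul, ← Complex.mul_conj, ← h1]
      ring
    obtain ⟨δ, rfl⟩ : ∃ δ : ℝ, d = (δ : ℂ) := by
      refine ⟨(a * Complex.normSq d)⁻¹, ?_⟩
      rw [Complex.ofReal_inv]
      exact eq_inv_of_mul_eq_one_right h2
    rw [Complex.conj_ofReal] at h1 hR1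
    have h3 : a * δ * δ ^ 2 = 1 := by exact_mod_cast h1
    have hδ : δ ≠ 0 := by exact_mod_cast hd
    have hpos : 0 < a * δ := by
      have : 0 < δ ^ 2 := by positivity
      exact pos_of_mul_pos_left (by rw [h3]; exact one_pos) this.le
    have hsq : ((√|a| : ℝ) : ℂ) * ((√|a| : ℝ) : ℂ) = ((|a| : ℝ) : ℂ) := by
      rw [← Complex.ofReal_mul, Real.mul_self_sqrt (abs_nonneg a)]
    have hform : (((√|a| : ℝ) : ℂ) • Vᵀ)ᴴ * Irs r s * (((√|a| : ℝ) : ℂ) • Vᵀ) =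
        ((|a| : ℝ) : ℂ) • (V * Irs r s * Vᴴ)ᵀ := by
      rw [← Irs_transpose_form, ← hsq, Matrix.conjTranspose_smul, Complex.star_def,
        Complex.conj_ofReal, Matrix.smul_mul, Matrix.smul_mul, Matrix.mul_smul, smul_smul]
    have hcase : (((√|a| : ℝ) : ℂ) • Vᵀ)ᴴ * Irs r s * (((√|a| : ℝ) : ℂ) • Vᵀ) = Irs r s ∨
        (((√|a| : ℝ) : ℂ) • Vᵀ)ᴴ * Irs r s * (((√|a| : ℝ) : ℂ) • Vᵀ) = -(Irs r s) := by
      have hVt := congrArg Matrix.transpose hV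
      rw [Matrix.transpose_smul, Irs_transpose] at hVt
      rw [hform]
      rcases abs_choice a with h | h
      · left
        rw [h, hVt]
      · right
        rw [h, Complex.ofReal_neg, neg_smul, hVt]
    refine ⟨|δ|, ((√|a| : ℝ) : ℂ) • Vᵀ, abs_pos.mpr hδ, isUnit_of_form hcase, hcase, ?_⟩
    have hτ : (a : ℂ) * δ = ((|δ| : ℝ) : ℂ) * ((|a| : ℝ) : ℂ) := by
      rw [← Complex.ofReal_mul, ← Complex.ofReal_mul, ← abs_mul, mul_comm δ a, abs_of_pos hpos]
    rw [hR1, hτ, ← hsq, Matrix.transpose_smul, Matrix.transpose_transpose, Matrix.smul_mul,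
      Matrix.smul_mul, Matrix.mul_smul, smul_smul, smul_smul, ← mul_assoc ((|δ| : ℝ) : ℂ)]
  · rintro ⟨τ, U, hτ, -, hU, hR1⟩
    obtain ⟨ε, hε, hform⟩ : ∃ ε : ℝ, ε * ε = 1 ∧
        Uᴴ * Irs r s * U = (ε : ℂ) • Irs r s := by
      rcases hU with h | h
      · exact ⟨1, by norm_num, by simpa using h⟩
      · exact ⟨-1, by norm_num, by simpa using h⟩
    have hε0 : ε ≠ 0 := left_ne_zero_of_mul_eq_one hε
    have hεc : (ε : ℂ) * ε = 1 := by exact_mod_cast hε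
    have hτc : (τ : ℂ) ≠ 0 := by exact_mod_cast hτ.ne'
    have hsq : ((√(τ ^ 3) : ℝ) : ℂ) * ((√(τ ^ 3) : ℝ) : ℂ) = (τ : ℂ) ^ 3 := by
      rw [← Complex.ofReal_mul, Real.mul_self_sqrt (by positivity), Complex.ofReal_pow]
    have ha : ε / τ ^ 3 ≠ 0 := by positivity
    have hd : ((ε * τ : ℝ) : ℂ) ≠ 0 := by exact_mod_cast mul_ne_zero hε0 hτ.ne'
    have hk : ((ε / τ ^ 3 : ℝ) : ℂ) * (starRingEnd ℂ) ((ε * τ : ℝ) : ℂ) ≠ 0 :=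
      mul_ne_zero (by exact_mod_cast ha) (by rw [Complex.conj_ofReal]; exact hd)
    refine ⟨ε / τ ^ 3, ((ε * τ : ℝ) : ℂ), ((√(τ ^ 3) : ℝ) : ℂ) • Uᵀ, 0, ha, hd, ?_, ?_⟩
    · have hUt : Uᵀ * Irs r s * Uᵀᴴ = (ε : ℂ) • Irs r s := by
        have h := Irs_transpose_form r s Uᵀ
        rw [Matrix.transpose_transpose, hform] at h
        have h' := congrArg Matrix.transpose h
        rw [Matrix.transpose_transpose, Matrix.transpose_smul, Irs_transpose] at h'
        exact h'.symm
      have hscale : (((√(τ ^ 3) : ℝ) : ℂ) • Uᵀ) * Irs r s * (((√(τ ^ 3) : ℝ) : ℂ) • Uᵀ)ᴴ =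
          (τ : ℂ) ^ 3 • (Uᵀ * Irs r s * Uᵀᴴ) := by
        rw [← hsq, Matrix.conjTranspose_smul, Complex.star_def, Complex.conj_ofReal,
          Matrix.smul_mul, Matrix.smul_mul, Matrix.mul_smul, smul_smul]
      rw [hscale, hUt, smul_smul, smul_smul]
      have : ((ε / τ ^ 3 : ℝ) : ℂ) * (τ : ℂ) ^ 3 * ε = 1 := by
        push_cast
        field_simp
        linear_combination hεc
      rw [this, one_smul]
    · rw [admissible_block_mul, smul_fromBlocks_eq_iff _ _ _ _ _ hk hd, Complex.conj_ofReal]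
      refine ⟨rfl, ?_, ?_⟩
      · push_cast
        field_simp
        linear_combination ((ε : ℂ) * ε + 1) * hεc
      · have hcoef : ((ε / τ ^ 3 : ℝ) : ℂ) * ((ε * τ : ℝ) : ℂ) * (τ : ℂ) ^ 3 = τ := by
          push_cast
          field_simp
          linear_combination hεc
        rw [hR1, Matrix.transpose_smul, Matrix.transpose_transpose, Matrix.smul_mul,
          Matrix.smul_mul, Matrix.mul_smul, smul_smul, smul_smul,
          mul_assoc _ _ ((√(τ ^ 3) : ℝ) : ℂ), hsq, hcoef]
end

section
/- Let U ⊆ ℝ^m be open, let ω be a smooth 1-form on U, and let L, K be smooth vector fields on U such that ω(L) ≡ 0, ω(K) ≡ 0 and ω([K,L]) ≡ 0 on U. Then for every smooth vector field X on U and every point of U, (𝒯_L 𝒯_K ω)(X) − (𝒯_K 𝒯_L ω)(X) = [L,K](ω(X)) + ω([X,[L,K]]). -/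
/-!
The identity follows from Cartan's formula `(𝒯_V η)(X) = V(η(X)) − X(η(V)) − η([V,X])`
(`formPair_contrForm`). Since `ω(K) ≡ 0`, it gives `(𝒯_K ω)(Y) = K(ω(Y)) − ω([K,Y])` on `U` for every
smooth `Y`, and in particular `(𝒯_K ω)(L) ≡ 0`, using the other two hypotheses. Applying the formula
again to `η = 𝒯_K ω`,
`(𝒯_L 𝒯_K ω)(X) = L(K(ω(X))) − L(ω([K,X])) − K(ω([L,X])) + ω([K,[L,X]])`
(`formPair_contrForm_contrForm`). The middle two terms are symmetric in `L, K`, so the difference is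
`[L,K](ω(X)) + ω([K,[L,X]] − [L,[K,X]])`, and the Jacobi identity finishes the proof. The commutator
formula `[V,W]f = V(Wf) − W(Vf)`, on which Jacobi also rests, is the symmetry of second derivatives.
-/

/-- The `j`-th partial derivative of a function `f : ℝ^m → ℂ` at `x`. -/
noncomputable def pd (m : ℕ) (j : Fin m) (f : (Fin m → ℝ) → ℂ) (x : Fin m → ℝ) : ℂ :=
  fderiv ℝ f x (Pi.single j 1)

/-- The action `(Vf)(x) = Σⱼ Vⱼ(x) · ∂f/∂xⱼ(x)` of a vector field `V` on a function `f`. -/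
noncomputable def vfAct (m : ℕ) (V : Fin m → (Fin m → ℝ) → ℂ)
    (f : (Fin m → ℝ) → ℂ) : (Fin m → ℝ) → ℂ :=
  fun x => ∑ j, V j x * pd m j f x

/-- The Lie bracket `[V,W]` of vector fields, with components `V(Wⱼ) − W(Vⱼ)`. -/
noncomputable def vfBracket (m : ℕ) (V W : Fin m → (Fin m → ℝ) → ℂ) :
    Fin m → (Fin m → ℝ) → ℂ :=
  fun j x => vfAct m V (W j) x - vfAct m W (V j) x

/-- The pairing `ω(V) = Σⱼ ωⱼ Vⱼ` of a 1-form with a vector field. -/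
noncomputable def formPair (m : ℕ) (ω V : Fin m → (Fin m → ℝ) → ℂ) : (Fin m → ℝ) → ℂ :=
  fun x => ∑ j, ω j x * V j x

/-- The contracted 1-form `𝒯_V ω = V ⌟ dω`, with components
`(𝒯_V ω)ₖ = Σⱼ Vⱼ·(∂ωₖ/∂xⱼ − ∂ωⱼ/∂xₖ)`. -/
noncomputable def contrForm (m : ℕ) (V ω : Fin m → (Fin m → ℝ) → ℂ) :
    Fin m → (Fin m → ℝ) → ℂ :=
  fun k x => ∑ j, V j x * (pd m j (ω k) x - pd m k (ω j) x)

section Calculus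

variable {m : ℕ} {x : Fin m → ℝ}

lemma pd_sub {f g : (Fin m → ℝ) → ℂ} (hf : DifferentiableAt ℝ f x) (hg : DifferentiableAt ℝ g x)
    (j : Fin m) : pd m j (fun y => f y - g y) x = pd m j f x - pd m j g x := by
  simp only [pd]
  rw [fderiv_fun_sub hf hg]
  rfl

lemma pd_mul {f g : (Fin m → ℝ) → ℂ} (hf : DifferentiableAt ℝ f x) (hg : DifferentiableAt ℝ g x)
    (j : Fin m) : pd m j (fun y => f y * g y) x = f x * pd m j g x + pd m j f x * g x := by
  simp only [pd]
  rw [fderiv_fun_mul hf hg]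
  simp [mul_comm]

lemma pd_sum {f : Fin m → (Fin m → ℝ) → ℂ} (hf : ∀ i, DifferentiableAt ℝ (f i) x)
    (j : Fin m) : pd m j (fun y => ∑ i, f i y) x = ∑ i, pd m j (f i) x := by
  simp only [pd]
  rw [fderiv_fun_sum (fun i _ => hf i)]
  simp

lemma pd_sum_mul {f g : Fin m → (Fin m → ℝ) → ℂ} (hf : ∀ i, DifferentiableAt ℝ (f i) x)
    (hg : ∀ i, DifferentiableAt ℝ (g i) x) (j : Fin m) :
    pd m j (fun y => ∑ i, f i y * g i y) x
      = ∑ i, (f i x * pd m j (g i) x + pd m j (f i) x * g i x) := by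
  rw [pd_sum (fun i => (hf i).fun_mul (hg i))]
  exact Finset.sum_congr rfl fun i _ => pd_mul (hf i) (hg i) j

lemma vfAct_sub (V : Fin m → (Fin m → ℝ) → ℂ) {f g : (Fin m → ℝ) → ℂ}
    (hf : DifferentiableAt ℝ f x) (hg : DifferentiableAt ℝ g x) :
    vfAct m V (fun y => f y - g y) x = vfAct m V f x - vfAct m V g x := by
  simp only [vfAct, pd_sub hf hg, mul_sub, Finset.sum_sub_distrib]

/-- Cartan's formula `(V ⌟ dη)(X) = V(η(X)) − X(η(V)) − η([V,X])`. -/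
lemma formPair_contrForm {η V X : Fin m → (Fin m → ℝ) → ℂ}
    (hη : ∀ j, DifferentiableAt ℝ (η j) x) (hV : ∀ j, DifferentiableAt ℝ (V j) x)
    (hX : ∀ j, DifferentiableAt ℝ (X j) x) :
    formPair m (contrForm m V η) X x
      = vfAct m V (formPair m η X) x - vfAct m X (formPair m η V) x
        - formPair m η (vfBracket m V X) x := by
  unfold formPair contrForm vfBracket vfAct
  simp only [pd_sum_mul hη hX, pd_sum_mul hη hV, Finset.mul_sum, Finset.sum_mul, mul_add, mul_sub,
    sub_mul, Finset.sum_add_distrib, Finset.sum_sub_distrib]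
  -- The double sums on the right match those on the left after exchanging the summation indices.
  have e1 : ∑ i, ∑ j, V i x * (η j x * pd m i (X j) x)
      = ∑ i, ∑ j, η i x * (V j x * pd m j (X i) x) := by
    rw [Finset.sum_comm]
    exact Finset.sum_congr rfl fun _ _ => Finset.sum_congr rfl fun _ _ => by ring
  have e2 : ∑ i, ∑ j, X i x * (η j x * pd m i (V j) x)
      = ∑ i, ∑ j, η i x * (X j x * pd m j (V i) x) := by
    rw [Finset.sum_comm]
    exact Finset.sum_congr rfl fun _ _ => Finset.sum_congr rfl fun _ _ => by ring
  have e3 : ∑ i, ∑ j, V i x * (pd m i (η j) x * X j x)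
      = ∑ i, ∑ j, V j x * pd m j (η i) x * X i x := by
    rw [Finset.sum_comm]
    exact Finset.sum_congr rfl fun _ _ => Finset.sum_congr rfl fun _ _ => by ring
  have e4 : ∑ i, ∑ j, X i x * (pd m i (η j) x * V j x)
      = ∑ i, ∑ j, V j x * pd m i (η j) x * X i x :=
    Finset.sum_congr rfl fun _ _ => Finset.sum_congr rfl fun _ _ => by ring
  rw [e1, e2, e3, e4]
  ring

end Calculus

section Smooth

variable {m : ℕ} {U : Set (Fin m → ℝ)} {x : Fin m → ℝ}

lemma differentiableAt_of_smooth (hU : IsOpen U) (hx : x ∈ U) {f : (Fin m → ℝ) → ℂ}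
    (hf : ContDiffOn ℝ (⊤ : ℕ∞) f U) : DifferentiableAt ℝ f x :=
  (hf.contDiffAt (hU.mem_nhds hx)).differentiableAt (by simp)

lemma smooth_pd (hU : IsOpen U) {f : (Fin m → ℝ) → ℂ} (hf : ContDiffOn ℝ (⊤ : ℕ∞) f U)
    (j : Fin m) : ContDiffOn ℝ (⊤ : ℕ∞) (pd m j f) U :=
  (hf.fderiv_of_isOpen hU (m := ((⊤ : ℕ∞) : WithTop ℕ∞)) (by simp)).clm_apply contDiffOn_const

lemma smooth_vfAct (hU : IsOpen U) {V : Fin m → (Fin m → ℝ) → ℂ} {f : (Fin m → ℝ) → ℂ}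
    (hV : ∀ j, ContDiffOn ℝ (⊤ : ℕ∞) (V j) U) (hf : ContDiffOn ℝ (⊤ : ℕ∞) f U) :
    ContDiffOn ℝ (⊤ : ℕ∞) (vfAct m V f) U :=
  ContDiffOn.sum fun j _ => (hV j).mul (smooth_pd hU hf j)

lemma smooth_vfBracket (hU : IsOpen U) {V W : Fin m → (Fin m → ℝ) → ℂ}
    (hV : ∀ j, ContDiffOn ℝ (⊤ : ℕ∞) (V j) U) (hW : ∀ j, ContDiffOn ℝ (⊤ : ℕ∞) (W j) U)
    (j : Fin m) : ContDiffOn ℝ (⊤ : ℕ∞) (vfBracket m V W j) U :=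
  (smooth_vfAct hU hV (hW j)).sub (smooth_vfAct hU hW (hV j))

lemma smooth_formPair {η V : Fin m → (Fin m → ℝ) → ℂ}
    (hη : ∀ j, ContDiffOn ℝ (⊤ : ℕ∞) (η j) U) (hV : ∀ j, ContDiffOn ℝ (⊤ : ℕ∞) (V j) U) :
    ContDiffOn ℝ (⊤ : ℕ∞) (formPair m η V) U :=
  ContDiffOn.sum fun j _ => (hη j).mul (hV j)

lemma smooth_contrForm (hU : IsOpen U) {V η : Fin m → (Fin m → ℝ) → ℂ}
    (hV : ∀ j, ContDiffOn ℝ (⊤ : ℕ∞) (V j) U) (hη : ∀ j, ContDiffOn ℝ (⊤ : ℕ∞) (η j) U)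
    (k : Fin m) : ContDiffOn ℝ (⊤ : ℕ∞) (contrForm m V η k) U :=
  ContDiffOn.sum fun j _ => (hV j).mul ((smooth_pd hU (hη k) j).sub (smooth_pd hU (hη j) k))

lemma vfAct_congr (hU : IsOpen U) (hx : x ∈ U) (V : Fin m → (Fin m → ℝ) → ℂ)
    {f g : (Fin m → ℝ) → ℂ} (h : ∀ y ∈ U, f y = g y) : vfAct m V f x = vfAct m V g x := by
  have h' : f =ᶠ[nhds x] g := Filter.eventuallyEq_of_mem (hU.mem_nhds hx) h
  simp only [vfAct, pd, h'.fderiv_eq]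

lemma vfAct_eq_zero (hU : IsOpen U) (hx : x ∈ U) (V : Fin m → (Fin m → ℝ) → ℂ)
    {f : (Fin m → ℝ) → ℂ} (h : ∀ y ∈ U, f y = 0) : vfAct m V f x = 0 := by
  rw [vfAct_congr hU hx V (g := fun _ => 0) h]
  simp [vfAct, pd]

lemma pd_comm (hU : IsOpen U) (hx : x ∈ U) {f : (Fin m → ℝ) → ℂ}
    (hf : ContDiffOn ℝ (⊤ : ℕ∞) f U) (i j : Fin m) :
    pd m i (pd m j f) x = pd m j (pd m i f) x := by
  have hc : ContDiffAt ℝ (⊤ : ℕ∞) f x := hf.contDiffAt (hU.mem_nhds hx)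
  have hd : DifferentiableAt ℝ (fderiv ℝ f) x :=
    (hc.fderiv_right (m := 1) (by norm_cast)).differentiableAt (by simp)
  have key : ∀ a b : Fin m, pd m a (pd m b f) x
      = fderiv ℝ (fderiv ℝ f) x (Pi.single a 1) (Pi.single b 1) := by
    intro a b
    unfold pd
    rw [fderiv_clm_apply hd (differentiableAt_const _)]
    simp
  rw [key, key]
  exact (hc.isSymmSndFDerivAt (by simp; norm_cast)).eq _ _

lemma vfAct_vfBracket (hU : IsOpen U) (hx : x ∈ U) {V W : Fin m → (Fin m → ℝ) → ℂ}
    {f : (Fin m → ℝ) → ℂ} (hV : ∀ j, ContDiffOn ℝ (⊤ : ℕ∞) (V j) U)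
    (hW : ∀ j, ContDiffOn ℝ (⊤ : ℕ∞) (W j) U) (hf : ContDiffOn ℝ (⊤ : ℕ∞) f U) :
    vfAct m (vfBracket m V W) f x = vfAct m V (vfAct m W f) x - vfAct m W (vfAct m V f) x := by
  have dV := fun j => differentiableAt_of_smooth hU hx (hV j)
  have dW := fun j => differentiableAt_of_smooth hU hx (hW j)
  have dp := fun j => differentiableAt_of_smooth hU hx (smooth_pd hU hf j)
  unfold vfBracket vfAct
  simp only [pd_sum_mul dV dp, pd_sum_mul dW dp, Finset.mul_sum, Finset.sum_mul, mul_add,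
    sub_mul, Finset.sum_add_distrib, Finset.sum_sub_distrib]
  have e1 : ∑ i, ∑ j, V i x * (W j x * pd m i (pd m j f) x)
      = ∑ i, ∑ j, W i x * (V j x * pd m i (pd m j f) x) := by
    rw [Finset.sum_comm]
    refine Finset.sum_congr rfl fun i _ => Finset.sum_congr rfl fun j _ => ?_
    rw [pd_comm hU hx hf j i]
    ring
  have e2 : ∑ i, ∑ j, V i x * (pd m i (W j) x * pd m j f x)
      = ∑ i, ∑ j, V j x * pd m j (W i) x * pd m i f x := by
    rw [Finset.sum_comm]
    exact Finset.sum_congr rfl fun _ _ => Finset.sum_congr rfl fun _ _ => by ring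
  have e3 : ∑ i, ∑ j, W i x * (pd m i (V j) x * pd m j f x)
      = ∑ i, ∑ j, W j x * pd m j (V i) x * pd m i f x := by
    rw [Finset.sum_comm]
    exact Finset.sum_congr rfl fun _ _ => Finset.sum_congr rfl fun _ _ => by ring
  rw [e1, e2, e3]
  ring

lemma vfBracket_vfBracket (hU : IsOpen U) (hx : x ∈ U) {A B C : Fin m → (Fin m → ℝ) → ℂ}
    (hA : ∀ j, ContDiffOn ℝ (⊤ : ℕ∞) (A j) U) (hB : ∀ j, ContDiffOn ℝ (⊤ : ℕ∞) (B j) U)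
    (hC : ∀ j, ContDiffOn ℝ (⊤ : ℕ∞) (C j) U) (j : Fin m) :
    vfBracket m A (vfBracket m B C) j x
      = vfAct m A (vfAct m B (C j)) x - vfAct m A (vfAct m C (B j)) x
        - (vfAct m B (vfAct m C (A j)) x - vfAct m C (vfAct m B (A j)) x) := by
  rw [← vfAct_vfBracket hU hx hB hC (hA j),
    ← vfAct_sub A (differentiableAt_of_smooth hU hx (smooth_vfAct hU hB (hC j)))
      (differentiableAt_of_smooth hU hx (smooth_vfAct hU hC (hB j)))]
  rfl

/-- The Jacobi identity, in the form `[X,[L,K]] = [K,[L,X]] − [L,[K,X]]`. -/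
lemma vfBracket_jacobi (hU : IsOpen U) (hx : x ∈ U) {X L K : Fin m → (Fin m → ℝ) → ℂ}
    (hX : ∀ j, ContDiffOn ℝ (⊤ : ℕ∞) (X j) U) (hL : ∀ j, ContDiffOn ℝ (⊤ : ℕ∞) (L j) U)
    (hK : ∀ j, ContDiffOn ℝ (⊤ : ℕ∞) (K j) U) (j : Fin m) :
    vfBracket m X (vfBracket m L K) j x
      = vfBracket m K (vfBracket m L X) j x - vfBracket m L (vfBracket m K X) j x := by
  rw [vfBracket_vfBracket hU hx hX hL hK, vfBracket_vfBracket hU hx hK hL hX,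
    vfBracket_vfBracket hU hx hL hK hX]
  ring

/-- Cartan's formula applied twice; the term `X((𝒯_K ω)(L))` vanishes by the three hypotheses
on `ω`. -/
lemma formPair_contrForm_contrForm (hU : IsOpen U) {ω L K X : Fin m → (Fin m → ℝ) → ℂ}
    (hω : ∀ j, ContDiffOn ℝ (⊤ : ℕ∞) (ω j) U) (hL : ∀ j, ContDiffOn ℝ (⊤ : ℕ∞) (L j) U)
    (hK : ∀ j, ContDiffOn ℝ (⊤ : ℕ∞) (K j) U) (hX : ∀ j, ContDiffOn ℝ (⊤ : ℕ∞) (X j) U)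
    (hωL : ∀ x ∈ U, formPair m ω L x = 0) (hωK : ∀ x ∈ U, formPair m ω K x = 0)
    (hωKL : ∀ x ∈ U, formPair m ω (vfBracket m K L) x = 0) (hx : x ∈ U) :
    formPair m (contrForm m L (contrForm m K ω)) X x
      = vfAct m L (vfAct m K (formPair m ω X)) x
        - vfAct m L (formPair m ω (vfBracket m K X)) x
        - vfAct m K (formPair m ω (vfBracket m L X)) x
        + formPair m ω (vfBracket m K (vfBracket m L X)) x := by
  have hTK : ∀ Y : Fin m → (Fin m → ℝ) → ℂ, (∀ j, ContDiffOn ℝ (⊤ : ℕ∞) (Y j) U) → ∀ y ∈ U,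
      formPair m (contrForm m K ω) Y y
        = vfAct m K (formPair m ω Y) y - formPair m ω (vfBracket m K Y) y := by
    intro Y hY y hy
    rw [formPair_contrForm (fun j => differentiableAt_of_smooth hU hy (hω j))
      (fun j => differentiableAt_of_smooth hU hy (hK j))
      (fun j => differentiableAt_of_smooth hU hy (hY j)), vfAct_eq_zero hU hy Y hωK, sub_zero]
  have hTKL : ∀ y ∈ U, formPair m (contrForm m K ω) L y = 0 := by
    intro y hy
    rw [hTK L hL y hy, hωKL y hy, vfAct_eq_zero hU hy K hωL, sub_zero]
  rw [formPair_contrForm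
      (fun j => differentiableAt_of_smooth hU hx (smooth_contrForm hU hK hω j))
      (fun j => differentiableAt_of_smooth hU hx (hL j))
      (fun j => differentiableAt_of_smooth hU hx (hX j)),
    vfAct_eq_zero hU hx X hTKL, hTK _ (smooth_vfBracket hU hL hX) x hx,
    vfAct_congr hU hx L (hTK X hX),
    vfAct_sub L (differentiableAt_of_smooth hU hx (smooth_vfAct hU hK (smooth_formPair hω hX)))
      (differentiableAt_of_smooth hU hx (smooth_formPair hω (smooth_vfBracket hU hK hX)))]
  ring

end Smooth

/-- Lemma 2.22.  If `ω(L) ≡ 0`, `ω(K) ≡ 0` and `ω([K,L]) ≡ 0` on an open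
set `U`, then for every smooth vector field `X` and every point of `U`,
`(𝒯_L 𝒯_K ω)(X) − (𝒯_K 𝒯_L ω)(X) = [L,K](ω(X)) + ω([X,[L,K]])`. -/
theorem contr_comm_identity (m : ℕ) (U : Set (Fin m → ℝ)) (hU : IsOpen U)
    (ω L K : Fin m → (Fin m → ℝ) → ℂ)
    (hω : ∀ j, ContDiffOn ℝ (⊤ : ℕ∞) (ω j) U)
    (hL : ∀ j, ContDiffOn ℝ (⊤ : ℕ∞) (L j) U)
    (hK : ∀ j, ContDiffOn ℝ (⊤ : ℕ∞) (K j) U)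
    (hωL : ∀ x ∈ U, formPair m ω L x = 0)
    (hωK : ∀ x ∈ U, formPair m ω K x = 0)
    (hωKL : ∀ x ∈ U, formPair m ω (vfBracket m K L) x = 0)
    (X : Fin m → (Fin m → ℝ) → ℂ) (hX : ∀ j, ContDiffOn ℝ (⊤ : ℕ∞) (X j) U)
    (x : Fin m → ℝ) (hx : x ∈ U) :
    formPair m (contrForm m L (contrForm m K ω)) X x
        - formPair m (contrForm m K (contrForm m L ω)) X x
      = vfAct m (vfBracket m L K) (formPair m ω X) x
        + formPair m ω (vfBracket m X (vfBracket m L K)) x := by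
  have hωLK : ∀ y ∈ U, formPair m ω (vfBracket m L K) y = 0 := by
    intro y hy
    rw [← neg_eq_zero, ← hωKL y hy]
    simp only [formPair, vfBracket, ← Finset.sum_neg_distrib]
    exact Finset.sum_congr rfl fun _ _ => by ring
  have hJ : formPair m ω (vfBracket m X (vfBracket m L K)) x
      = formPair m ω (vfBracket m K (vfBracket m L X)) x
        - formPair m ω (vfBracket m L (vfBracket m K X)) x := by
    simp only [formPair, vfBracket_jacobi hU hx hX hL hK, mul_sub, Finset.sum_sub_distrib]
  rw [formPair_contrForm_contrForm hU hω hL hK hX hωL hωK hωKL hx,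
    formPair_contrForm_contrForm hU hω hK hL hX hωK hωL hωLK hx,
    vfAct_vfBracket hU hx hL hK (smooth_formPair hω hX), hJ]
  ring
end
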